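/- Let 2 ≤ s < S < p/2, let u > 1, and set t = s·max{ √(4u·log(s·C(S,s))/(n(p−S))), 8u·log(s·C(S,s))/(n(p−S)) }, where C(S,s) denotes the binomial coefficient 'S choose s'. Consider the test Δ that rejects if and only if there exists a subset 𝐒 ⊆ {1,…,S} with |𝐒| = s such that ∑_{j∈𝐒} |Tr(A_j(Σ_n − I_p))| ≥ t. If σ ≥ t + max{ √(4(u−1)·log(s(2s+1)·C(S,s))/(n(p−S))), 8(u−1)·log(s(2s+1)·C(S,s))/(n(p−S)) }, then P_{I_p}[Δ rejects] + sup_{Σ ∈ F(s,S,σ)} P_Σ[Δ accepts] ≤ 4·exp(−(u−1)·log(s·C(S,s))), where P_{I_p} (resp. P_Σ) denotes the law of Σ_n when X_1,…,X_n are i.i.d. N_p(0, I_p) (resp. N_p(0, Σ)). -/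

import Mathlib

open MeasureTheory Matrix Real
open scoped ENNReal BigOperators NNReal

noncomputable def gaussianPDF {p : ℕ} (C : Matrix (Fin p) (Fin p) ℝ) (x : Fin p → ℝ) : ℝ≥0∞ :=
  ENNReal.ofReal ((2 * Real.pi) ^ (-(p : ℝ) / 2) * C.det ^ (-(1:ℝ)/2) *
    Real.exp (-(1/2) * (x ⬝ᵥ C⁻¹.mulVec x)))

/-- The centered multivariate Gaussian measure `N_p(0, C)` on `Fin p → ℝ`. -/
noncomputable def gaussianMeasure {p : ℕ} (C : Matrix (Fin p) (Fin p) ℝ) :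
    Measure (Fin p → ℝ) :=
  MeasureTheory.volume.withDensity (gaussianPDF C)

/-- The law of `n` i.i.d. `N_p(0, C)` vectors. -/
noncomputable def iidGaussian (n p : ℕ) (C : Matrix (Fin p) (Fin p) ℝ) :
    Measure (Fin n → Fin p → ℝ) :=
  MeasureTheory.volume.withDensity fun X => ∏ k, gaussianPDF C (X k)

/-- The sample covariance matrix `Σ_n = (1/n) ∑ X_k X_kᵀ`. -/
noncomputable def sampleCov {n p : ℕ} (X : Fin n → Fin p → ℝ) :
    Matrix (Fin p) (Fin p) ℝ :=
  (n : ℝ)⁻¹ • ∑ k, Matrix.of fun i j => X k i * X k j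

/-- Frobenius norm of a matrix. -/
noncomputable def frobNorm {p : ℕ} (M : Matrix (Fin p) (Fin p) ℝ) : ℝ :=
  Real.sqrt (∑ i, ∑ j, (M i j)^2)

/-- Spectral (ℓ²-operator) norm of a matrix. -/
noncomputable def specNorm {p : ℕ} (M : Matrix (Fin p) (Fin p) ℝ) : ℝ :=
  ‖Matrix.toEuclideanCLM (𝕜 := ℝ) M‖

/-- The matrix `A_j` with entries `1/(2(p-j))` on the `j`-th upper and lower diagonals. -/
noncomputable def lagMatrix (p j : ℕ) : Matrix (Fin p) (Fin p) ℝ :=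
  Matrix.of fun k l => if ((k:ℤ) - (l:ℤ)).natAbs = j then 1/(2*((p:ℝ) - j)) else 0

/-- Two-sided class `F(s,S,σ)` of sparse Toeplitz covariance matrices with
diagonal value `σ0`. -/
def memF (p s S : ℕ) (σ σ0 : ℝ) (C : Matrix (Fin p) (Fin p) ℝ) : Prop :=
  C.PosDef ∧ ∃ v : ℕ → ℝ, v 0 = σ0 ∧
    (∀ i j : Fin p, C i j = v ((i:ℤ) - (j:ℤ)).natAbs) ∧
    ∃ T : Finset ℕ, T ⊆ Finset.Icc 1 S ∧ T.card = s ∧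
      (∀ j ∈ T, σ ≤ |v j|) ∧ (∀ j, 1 ≤ j → j ≤ p - 1 → j ∉ T → v j = 0)

/-- One-sided class `F₊(s,S,σ)` of sparse Toeplitz covariance matrices with
diagonal value `σ0`. -/
def memFplus (p s S : ℕ) (σ σ0 : ℝ) (C : Matrix (Fin p) (Fin p) ℝ) : Prop :=
  C.PosDef ∧ ∃ v : ℕ → ℝ, v 0 = σ0 ∧
    (∀ i j : Fin p, C i j = v ((i:ℤ) - (j:ℤ)).natAbs) ∧
    ∃ T : Finset ℕ, T ⊆ Finset.Icc 1 S ∧ T.card = s ∧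
      (∀ j ∈ T, σ ≤ v j) ∧ (∀ j, 1 ≤ j → j ≤ p - 1 → j ∉ T → v j = 0)

/-!
A signed combination `∑ j ∈ T, ε j * Tr (A_j Σ_n)` of lag statistics is a Gaussian quadratic form.
Diagonalising it turns it into a weighted sum of `χ²` variables, whose lower tail is of
Laurent–Massart type: at level `exp (-r²)` the deviation is at most `2 V r + 2 B r²`, where `V²` is
the trace of the square of `(∑ ε j A_j) Σ` and `B` bounds its operator norm, up to the factor `n`.

Under `Σ = 1` this bounds each `|Tr (A_j (Σ_n - 1))|`. A scan statistic exceeding `t` forces one of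
the `S` lags to exceed `t / s`, so the union bound is over lags, not over subsets. Under `Σ ∈ F`,
the scan over the true support dominates the combination with `ε j = sign (σ_j)`, whose mean is
`M = ∑ |σ_j|`. Here `V` and `B` grow with `‖Σ‖ ≤ 1 + 2 M`, but so does the signal, and positivity
of `Σ` along arithmetic progressions of indices keeps the `|σ_j|` away from `1` just enough for the
deviation never to reach `M - t`.
-/

open ProbabilityTheory (gaussianReal gaussianPDFReal mgf HasLaw iIndepFun mgf_const_mul mgf_pos_iff
  integral_gaussianReal_eq_integral_smul measure_le_le_exp_mul_mgf iIndepFun_uncurry_infinitePi')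
open scoped Matrix.Norms.L2Operator MatrixOrder

section GaussianLaw

lemma lintegral_pi_prod_eq_prod {ι : Type*} [Fintype ι] {E : ι → Type*}
    [∀ i, MeasurableSpace (E i)] {μ : ∀ i, Measure (E i)} [∀ i, SigmaFinite (μ i)]
    {f : ∀ i, E i → ℝ≥0∞} (hf : ∀ i, Measurable (f i)) :
    ∫⁻ x, ∏ i, f i (x i) ∂Measure.pi μ = ∏ i, ∫⁻ y, f i y ∂μ i := by
  classical
  rcases isEmpty_or_nonempty (∀ i, E i) with hempty | ⟨⟨x₀⟩⟩
  · obtain ⟨i, hi⟩ := isEmpty_pi.1 hempty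
    simp [Finset.prod_eq_zero (Finset.mem_univ i)]
  have hmeas (s : Finset ι) : Measurable fun x : ∀ i, E i ↦ ∏ i ∈ s, f i (x i) := by fun_prop
  have hmarginal (s : Finset ι) :
      ∫⋯∫⁻_s, (fun x ↦ ∏ i ∈ s, f i (x i)) ∂μ = fun _ ↦ ∏ i ∈ s, ∫⁻ y, f i y ∂μ i := by
    induction s using Finset.induction_on with
    | empty => simp
    | insert i s hi ih =>
      have hsplit (x : ∀ i, E i) :
          ∫⁻ y, ∏ j ∈ insert i s, f j (Function.update x i y j) ∂μ i =
            (∫⁻ y, f i y ∂μ i) * ∏ j ∈ s, f j (x j) := by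
        rw [← lintegral_mul_const _ (hf i)]
        refine lintegral_congr fun y ↦ ?_
        rw [Finset.prod_insert hi, Function.update_self]
        exact congrArg _ (Finset.prod_congr rfl fun j hj ↦ by
          rw [Function.update_of_ne (ne_of_mem_of_not_mem hj hi)])
      funext x
      rw [lmarginal_insert' _ (hmeas _) hi, Finset.prod_insert hi]
      simp only [hsplit]
      rw [lmarginal, lintegral_const_mul _ (by fun_prop), ← congrFun ih x, lmarginal]
  rw [lintegral_eq_lmarginal_univ x₀, hmarginal]

lemma pi_withDensity {ι : Type*} [Fintype ι] {E : ι → Type*} [∀ i, MeasurableSpace (E i)]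
    {μ : ∀ i, Measure (E i)} [∀ i, SigmaFinite (μ i)] {f : ∀ i, E i → ℝ≥0∞}
    (hf : ∀ i, Measurable (f i)) [∀ i, SigmaFinite ((μ i).withDensity (f i))] :
    Measure.pi (fun i ↦ (μ i).withDensity (f i)) =
      (Measure.pi μ).withDensity fun x ↦ ∏ i, f i (x i) := by
  refine Measure.pi_eq fun s hs ↦ ?_
  rw [withDensity_apply _ (.univ_pi hs), Measure.restrict_pi_pi, lintegral_pi_prod_eq_prod hf]
  exact Finset.prod_congr rfl fun i _ ↦ (withDensity_apply _ (hs i)).symm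

lemma map_withDensity_comp {α β : Type*} [MeasurableSpace α] [MeasurableSpace β] {μ : Measure α}
    {f : β → ℝ≥0∞} {e : α → β} (hf : Measurable f) (he : Measurable e) :
    (μ.withDensity (f ∘ e)).map e = (μ.map e).withDensity f := by
  ext s hs
  rw [Measure.map_apply he hs, withDensity_apply _ (he hs), withDensity_apply _ hs,
    setLIntegral_map hs hf he]
  rfl

variable {p : ℕ}

lemma measurable_mulVec (W : Matrix (Fin p) (Fin p) ℝ) : Measurable (W *ᵥ ·) :=
  (Matrix.toLin' W).continuous_on_pi.measurable

lemma measurable_gaussianPDF (C : Matrix (Fin p) (Fin p) ℝ) : Measurable (gaussianPDF C) := by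
  unfold gaussianPDF dotProduct Matrix.mulVec
  simp only [dotProduct]
  fun_prop

lemma gaussianMeasure_one :
    gaussianMeasure (1 : Matrix (Fin p) (Fin p) ℝ) =
      Measure.pi fun _ ↦ gaussianReal 0 1 := by
  have hreal : gaussianReal 0 1 =
      volume.withDensity (ProbabilityTheory.gaussianPDF 0 1) :=
    ProbabilityTheory.gaussianReal_of_var_ne_zero 0 one_ne_zero
  have : SigmaFinite (volume.withDensity (ProbabilityTheory.gaussianPDF 0 1)) :=
    hreal ▸ inferInstance
  rw [hreal, pi_withDensity fun _ ↦ ProbabilityTheory.measurable_gaussianPDF 0 1, ← volume_pi,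
    gaussianMeasure]
  congr 1
  funext x
  simp only [gaussianPDF, ProbabilityTheory.gaussianPDF, gaussianPDFReal]
  rw [← ENNReal.ofReal_prod_of_nonneg fun _ _ ↦ by positivity, Finset.prod_mul_distrib,
    ← Real.exp_sum, Finset.prod_const, Finset.card_univ, Fintype.card_fin, inv_one,
    Matrix.one_mulVec, Matrix.det_one, Real.one_rpow, mul_one, neg_div,
    Real.rpow_neg (by positivity), Real.rpow_div_two_eq_sqrt _ (by positivity), Real.rpow_natCast]
  simp only [NNReal.coe_one, mul_one, sub_zero, inv_pow, dotProduct, Finset.mul_sum]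
  congr 3
  exact Finset.sum_congr rfl fun i _ ↦ by ring

lemma ofReal_abs_det_mul_gaussianPDF {W : Matrix (Fin p) (Fin p) ℝ} (hW : W.det ≠ 0)
    (y : Fin p → ℝ) :
    ENNReal.ofReal |W.det| * gaussianPDF (W * Wᵀ) (W *ᵥ y) = gaussianPDF 1 y := by
  have hunit : IsUnit W.det := isUnit_iff_ne_zero.2 hW
  have hquad : (W *ᵥ y) ⬝ᵥ (W * Wᵀ)⁻¹ *ᵥ (W *ᵥ y) = y ⬝ᵥ y := by
    rw [Matrix.mul_inv_rev, Matrix.mulVec_mulVec, Matrix.nonsing_inv_mul_cancel_right _ _ hunit,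
      ← Matrix.vecMul_transpose, ← Matrix.dotProduct_mulVec, Matrix.mulVec_mulVec,
      Matrix.mul_nonsing_inv _ (by simpa using hunit), Matrix.one_mulVec]
  have hdet : |W.det| * (W * Wᵀ).det ^ (-(1 : ℝ) / 2) = 1 := by
    rw [Matrix.det_mul, Matrix.det_transpose, neg_div, Real.rpow_neg (mul_self_nonneg _),
      ← Real.sqrt_eq_rpow, Real.sqrt_mul_self_eq_abs, mul_inv_cancel₀ (abs_ne_zero.2 hW)]
  rw [gaussianPDF, gaussianPDF, ← ENNReal.ofReal_mul (abs_nonneg _), hquad, inv_one,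
    Matrix.one_mulVec, Matrix.det_one, Real.one_rpow, mul_one, ← mul_assoc, mul_left_comm, hdet,
    mul_one]

lemma gaussianMeasure_mul_transpose {W : Matrix (Fin p) (Fin p) ℝ} (hW : W.det ≠ 0) :
    gaussianMeasure (W * Wᵀ) = (gaussianMeasure 1).map (W *ᵥ ·) := by
  have hvol : volume = ENNReal.ofReal |W.det| • (volume : Measure (Fin p → ℝ)).map (W *ᵥ ·) := by
    have h := Real.map_matrix_volume_pi_eq_smul_volume_pi hW
    rw [show ⇑(Matrix.toLin' W) = (W *ᵥ ·) from rfl] at h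
    rw [h, smul_smul, ← ENNReal.ofReal_mul (abs_nonneg _), ← abs_mul, mul_inv_cancel₀ hW, abs_one,
      ENNReal.ofReal_one, one_smul]
  calc gaussianMeasure (W * Wᵀ)
      = ENNReal.ofReal |W.det| • (volume.map (W *ᵥ ·)).withDensity (gaussianPDF (W * Wᵀ)) := by
        rw [← withDensity_smul_measure, ← hvol, gaussianMeasure]
    _ = (volume.withDensity (ENNReal.ofReal |W.det| • (gaussianPDF (W * Wᵀ) ∘ (W *ᵥ ·)))).map
          (W *ᵥ ·) := by
        rw [← map_withDensity_comp (measurable_gaussianPDF _) (measurable_mulVec W),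
          ← Measure.map_smul,
          withDensity_smul _ ((measurable_gaussianPDF _).comp (measurable_mulVec W))]
    _ = (gaussianMeasure 1).map (W *ᵥ ·) := by
        rw [gaussianMeasure]
        congr 2
        exact funext (ofReal_abs_det_mul_gaussianPDF hW)

lemma iidGaussian_mul_transpose (n : ℕ) {W : Matrix (Fin p) (Fin p) ℝ} (hW : W.det ≠ 0) :
    iidGaussian n p (W * Wᵀ) =
      (Measure.pi fun _ ↦ Measure.pi fun _ ↦ gaussianReal 0 1).map
        fun Z k ↦ W *ᵥ Z k := by
  have hlaw : gaussianMeasure (W * Wᵀ) =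
      (Measure.pi fun _ ↦ gaussianReal 0 1).map (W *ᵥ ·) := by
    rw [gaussianMeasure_mul_transpose hW, gaussianMeasure_one]
  have : IsProbabilityMeasure (gaussianMeasure (W * Wᵀ)) :=
    hlaw ▸ Measure.isProbabilityMeasure_map (measurable_mulVec W).aemeasurable
  have : SigmaFinite (volume.withDensity (gaussianPDF (W * Wᵀ))) := by
    change SigmaFinite (gaussianMeasure _)
    infer_instance
  have : SigmaFinite ((Measure.pi fun _ : Fin p ↦ gaussianReal 0 1).map
    (W *ᵥ ·)) := hlaw ▸ inferInstance
  rw [Measure.pi_map_pi fun _ ↦ (measurable_mulVec W).aemeasurable, ← hlaw]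
  exact (pi_withDensity fun _ ↦ measurable_gaussianPDF _).symm

end GaussianLaw

section LaurentMassart

lemma sub_sq_div_le_log_one_add {w β : ℝ} (hw : |w| ≤ β) (hβ : β < 1) :
    w - w ^ 2 / (2 * (1 - β)) ≤ Real.log (1 + w) := by
  have hβ0 : 0 ≤ β := (abs_nonneg w).trans hw
  have hβ1 : 0 < 1 - β := sub_pos.2 hβ
  have hw1 : 1 - β ≤ 1 + w := by linarith [neg_le_of_abs_le hw]
  rcases le_total 0 w with h | h
  · calc w - w ^ 2 / (2 * (1 - β))
        ≤ w - w ^ 2 / 2 := by gcongr; linarith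
      _ ≤ 2 * w / (w + 2) := by
        rw [le_div_iff₀ (by linarith)]
        nlinarith [pow_nonneg h 3]
      _ ≤ Real.log (1 + w) := Real.le_log_one_add_of_nonneg h
  · have hpos : 0 < 1 + w := hβ1.trans_le hw1
    have hlog : 0 ≤ Real.log (1 + w)⁻¹ := Real.log_nonneg ((one_le_inv₀ hpos).2 (by linarith))
    calc w - w ^ 2 / (2 * (1 - β))
        ≤ w - w ^ 2 / (2 * (1 + w)) := by gcongr
      _ = -Real.sinh (Real.log (1 + w)⁻¹) := by
        rw [Real.sinh_log (inv_pos.2 hpos)]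
        field_simp
        ring
      _ ≤ -Real.log (1 + w)⁻¹ := neg_le_neg (Real.self_le_sinh_iff.2 hlog)
      _ = Real.log (1 + w) := by rw [Real.log_inv, neg_neg]

lemma inv_sqrt_one_add_le_exp {w β : ℝ} (hw : |w| ≤ β) (hβ : β < 1) :
    (√(1 + w))⁻¹ ≤ Real.exp (-(w / 2) + w ^ 2 / (4 * (1 - β))) := by
  have hpos : 0 < 1 + w := by linarith [neg_le_of_abs_le hw]
  have hsplit : w ^ 2 / (4 * (1 - β)) = w ^ 2 / (2 * (1 - β)) / 2 := by
    rw [div_div]; ring_nf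
  rw [← Real.log_le_iff_le_exp (inv_pos.2 (Real.sqrt_pos.2 hpos)), Real.log_inv,
    Real.log_sqrt hpos.le, hsplit]
  linarith [sub_sq_div_le_log_one_add hw hβ]

lemma mgf_sq_gaussianReal {t : ℝ} (ht : 2 * t < 1) :
    mgf (fun z ↦ z ^ 2) (gaussianReal 0 1) t = (√(1 - 2 * t))⁻¹ := by
  have hpos : 0 < 1 - 2 * t := sub_pos.2 ht
  calc mgf (fun z ↦ z ^ 2) (gaussianReal 0 1) t
      = ∫ z : ℝ, (√(2 * π))⁻¹ * Real.exp (-((1 - 2 * t) / 2) * z ^ 2) := by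
        rw [mgf, integral_gaussianReal_eq_integral_smul one_ne_zero]
        refine integral_congr_ae (.of_forall fun z ↦ ?_)
        simp only [gaussianPDFReal, NNReal.coe_one, mul_one, sub_zero, smul_eq_mul]
        rw [mul_assoc, ← Real.exp_add]
        ring_nf
    _ = (√(1 - 2 * t))⁻¹ := by
        rw [integral_const_mul, integral_gaussian, ← Real.sqrt_inv, ← Real.sqrt_mul (by positivity),
          ← Real.sqrt_inv]
        congr 1
        field_simp

variable {ι Ω : Type*} [Fintype ι] [MeasurableSpace Ω] {P : Measure Ω} {Z : ι → Ω → ℝ} {d : ι → ℝ}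

lemma mgf_sum_mul_sq (hZ : ∀ i, HasLaw (Z i) (gaussianReal 0 1) P) (hind : iIndepFun Z P) {t : ℝ}
    (ht : ∀ i, 2 * (t * d i) < 1) :
    mgf (fun ω ↦ ∑ i, d i * Z i ω ^ 2) P t = ∏ i, (√(1 - 2 * (t * d i)))⁻¹ := by
  have hmeas (i : ι) : AEMeasurable (fun ω ↦ d i * Z i ω ^ 2) P :=
    ((hZ i).aemeasurable.pow_const 2).const_mul (d i)
  have hindep : iIndepFun (fun i ω ↦ d i * Z i ω ^ 2) P :=
    hind.comp (fun i z ↦ d i * z ^ 2) fun i ↦ by fun_prop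
  have hsum := hindep.mgf_sum₀ hmeas Finset.univ (t := t)
  simp only [Finset.sum_fn] at hsum
  rw [hsum]
  refine Finset.prod_congr rfl fun i _ ↦ ?_
  rw [mgf_const_mul, mul_comm (d i), ← mgf_sq_gaussianReal (ht i), mgf, mgf]
  exact (hZ i).integral_comp (f := fun z ↦ Real.exp (t * d i * z ^ 2)) (by fun_prop)

lemma prod_inv_sqrt_le_exp {θ b ν : ℝ} (hθ : 0 ≤ θ) (hθb : 2 * θ * b < 1)
    (hdb : ∀ i, |d i| ≤ b) (hdν : ∑ i, d i ^ 2 ≤ ν ^ 2) :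
    ∏ i, (√(1 + 2 * θ * d i))⁻¹ ≤
      Real.exp (-(θ * ∑ i, d i) + θ ^ 2 * ν ^ 2 / (1 - 2 * θ * b)) := by
  have hw (i : ι) : |2 * θ * d i| ≤ 2 * θ * b := by
    rw [abs_mul, abs_of_nonneg (by positivity : (0 : ℝ) ≤ 2 * θ)]
    gcongr
    exact hdb i
  have hβ : 0 < 1 - 2 * θ * b := sub_pos.2 hθb
  calc ∏ i, (√(1 + 2 * θ * d i))⁻¹
      ≤ ∏ i, Real.exp (-(2 * θ * d i / 2) + (2 * θ * d i) ^ 2 / (4 * (1 - 2 * θ * b))) :=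
        Finset.prod_le_prod (fun i _ ↦ by positivity) fun i _ ↦ inv_sqrt_one_add_le_exp (hw i) hθb
    _ = Real.exp (-(θ * ∑ i, d i) + θ ^ 2 * (∑ i, d i ^ 2) / (1 - 2 * θ * b)) := by
        rw [← Real.exp_sum, Finset.sum_add_distrib, Finset.mul_sum, Finset.mul_sum,
          Finset.sum_div, ← Finset.sum_neg_distrib]
        congr 2 <;> exact Finset.sum_congr rfl fun i _ ↦ by field_simp; try ring
    _ ≤ Real.exp (-(θ * ∑ i, d i) + θ ^ 2 * ν ^ 2 / (1 - 2 * θ * b)) := by gcongr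

theorem measureReal_sum_mul_sq_le_le_exp (hZ : ∀ i, HasLaw (Z i) (gaussianReal 0 1) P)
    (hind : iIndepFun Z P) {ν b r : ℝ} (hν : 0 < ν) (hb : 0 ≤ b) (hr : 0 ≤ r)
    (hdb : ∀ i, |d i| ≤ b) (hdν : ∑ i, d i ^ 2 ≤ ν ^ 2) :
    P.real {ω | ∑ i, d i * Z i ω ^ 2 ≤ ∑ i, d i - 2 * ν * r - 2 * b * r ^ 2} ≤
      Real.exp (-r ^ 2) := by
  have : IsProbabilityMeasure P := hind.isProbabilityMeasure
  -- The value of `θ` minimising the exponent of the Chernoff bound.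
  set θ : ℝ := r / (ν + 2 * b * r) with hθ
  have hθ0 : 0 ≤ θ := by positivity
  have hβ : 1 - 2 * θ * b = ν / (ν + 2 * b * r) := by rw [hθ]; field_simp; ring
  have hθb : 2 * θ * b < 1 := by rw [← sub_pos, hβ]; positivity
  have hd (i : ι) : -(2 * θ * d i) < 1 := by nlinarith [neg_le_of_abs_le (hdb i)]
  have hmgf : mgf (fun ω ↦ ∑ i, d i * Z i ω ^ 2) P (-θ) = ∏ i, (√(1 + 2 * θ * d i))⁻¹ := by
    rw [mgf_sum_mul_sq hZ hind fun i ↦ by linarith [hd i]]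
    exact Finset.prod_congr rfl fun i _ ↦ by ring_nf
  have hint : Integrable (fun ω ↦ Real.exp (-θ * ∑ i, d i * Z i ω ^ 2)) P := by
    rw [← mgf_pos_iff, hmgf]
    exact Finset.prod_pos fun i _ ↦ inv_pos.2 (Real.sqrt_pos.2 (by linarith [hd i]))
  have hmgf_le := hmgf.trans_le (prod_inv_sqrt_le_exp hθ0 hθb hdb hdν)
  refine (measure_le_le_exp_mul_mgf _ (neg_nonpos.2 hθ0) hint).trans ?_
  refine (mul_le_mul_of_nonneg_left hmgf_le (Real.exp_nonneg _)).trans_eq ?_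
  rw [← Real.exp_add, hβ, hθ]
  congr 1
  field_simp
  ring

end LaurentMassart

section OperatorNorm

variable {m : Type*} {B C : Matrix m m ℝ}

lemma isHermitian_sum_smul {ι : Type*} {T : Finset ι} {A : ι → Matrix m m ℝ}
    (hA : ∀ j ∈ T, (A j).IsHermitian) (ε : ι → ℝ) : (∑ j ∈ T, ε j • A j).IsHermitian := by
  rw [Matrix.IsHermitian, Matrix.conjTranspose_sum]
  exact Finset.sum_congr rfl fun j hj ↦ by
    rw [Matrix.conjTranspose_smul, (hA j hj).eq, star_trivial]

variable [Fintype m]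

lemma trace_mul_self_mul_mul_transpose (hB : B.IsHermitian) (W : Matrix m m ℝ) :
    (B * B * (W * Wᵀ)).trace = ((B * W)ᵀ * (B * W)).trace := by
  rw [Matrix.transpose_mul, ← Matrix.conjTranspose_eq_transpose_of_trivial B, hB.eq,
    ← Matrix.mul_assoc, Matrix.trace_mul_comm]
  simp only [Matrix.mul_assoc]

lemma trace_sum_smul_mul_self_mul_le {ι : Type*} {T : Finset ι} {A : ι → Matrix m m ℝ} {ε : ι → ℝ}
    (hC : C.PosSemidef) (hA : ∀ j ∈ T, (A j).IsHermitian) (hε : ∀ j ∈ T, |ε j| ≤ 1) :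
    ((∑ j ∈ T, ε j • A j) * (∑ j ∈ T, ε j • A j) * C).trace ≤
      T.card * ∑ j ∈ T, (A j * A j * C).trace := by
  classical
  have hB := isHermitian_sum_smul hA ε
  obtain ⟨W, rfl⟩ : ∃ W, C = W * Wᵀ := by
    obtain ⟨H, rfl⟩ := CStarAlgebra.nonneg_iff_eq_star_mul_self.1 hC.nonneg
    exact ⟨star H, congrArg (star H * ·) (star_star H).symm⟩
  have htrace (M : Matrix m m ℝ) : (Mᵀ * M).trace = ∑ i, ∑ k, M k i ^ 2 := by
    simp only [Matrix.trace, Matrix.diag, Matrix.mul_apply, Matrix.transpose_apply, sq]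
  have hentry (i k : m) : ((∑ j ∈ T, ε j • A j) * W) k i ^ 2 ≤
      T.card * ∑ j ∈ T, (A j * W) k i ^ 2 := by
    simp only [Matrix.sum_mul, Matrix.sum_apply, Matrix.smul_mul, Matrix.smul_apply, smul_eq_mul]
    refine sq_sum_le_card_mul_sum_sq.trans ?_
    refine mul_le_mul_of_nonneg_left (Finset.sum_le_sum fun j hj ↦ ?_) (Nat.cast_nonneg _)
    rw [mul_pow]
    exact mul_le_of_le_one_left (sq_nonneg _) ((sq_le_one_iff_abs_le_one _).2 (hε j hj))
  rw [trace_mul_self_mul_mul_transpose hB, htrace,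
    Finset.sum_congr rfl fun j hj ↦ (trace_mul_self_mul_mul_transpose (hA j hj) W).trans (htrace _)]
  calc ∑ i, ∑ k, ((∑ j ∈ T, ε j • A j) * W) k i ^ 2
      ≤ ∑ i, ∑ k, T.card * ∑ j ∈ T, (A j * W) k i ^ 2 := by gcongr with i _ k _; exact hentry i k
    _ = T.card * ∑ j ∈ T, ∑ i, ∑ k, (A j * W) k i ^ 2 := by
      simp only [← Finset.mul_sum, Finset.sum_comm (s := T)]

variable [DecidableEq m]

lemma l2_opNorm_le_of_forall_sum_abs_le {M : Matrix m m ℝ} {R : ℝ} (hR : 0 ≤ R)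
    (hrow : ∀ i, ∑ j, |M i j| ≤ R) (hcol : ∀ j, ∑ i, |M i j| ≤ R) : ‖M‖ ≤ R := by
  rw [← Matrix.l2_opNorm_toEuclideanCLM]
  refine ContinuousLinearMap.opNorm_le_bound _ hR fun x ↦ ?_
  have hentry (i : m) : (M *ᵥ x) i ^ 2 ≤ R * ∑ j, |M i j| * x j ^ 2 := calc
    (M *ᵥ x) i ^ 2 ≤ (∑ j, |M i j|) * ∑ j, |M i j| * x j ^ 2 :=
      Finset.sum_sq_le_sum_mul_sum_of_sq_le_mul _ (fun _ _ ↦ abs_nonneg _)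
        (fun _ _ ↦ by positivity) fun j _ ↦ by
          rw [mul_pow, ← sq_abs (M i j), ← mul_assoc, sq |M i j|]
    _ ≤ R * ∑ j, |M i j| * x j ^ 2 := by gcongr; exact hrow i
  have hsq : ‖Matrix.toEuclideanCLM (𝕜 := ℝ) M x‖ ^ 2 ≤ (R * ‖x‖) ^ 2 := calc
    ‖Matrix.toEuclideanCLM (𝕜 := ℝ) M x‖ ^ 2 = ∑ i, (M *ᵥ x) i ^ 2 := by
      simp only [EuclideanSpace.real_norm_sq_eq, Matrix.ofLp_toEuclideanCLM]
    _ ≤ R * ∑ j, (∑ i, |M i j|) * x j ^ 2 := by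
      simp only [Finset.sum_mul]
      rw [Finset.sum_comm, Finset.mul_sum]
      exact Finset.sum_le_sum fun i _ ↦ hentry i
    _ ≤ R * ∑ j, R * x j ^ 2 := by gcongr with j; exact hcol j
    _ = (R * ‖x‖) ^ 2 := by rw [← Finset.mul_sum, mul_pow, EuclideanSpace.real_norm_sq_eq]; ring
  exact (sq_le_sq₀ (norm_nonneg _) (by positivity)).1 hsq

lemma exists_mul_transpose_eq_and_eq_diagonal (hC : C.PosSemidef) (hB : B.IsHermitian) :
    ∃ (W : Matrix m m ℝ) (d : m → ℝ), W * Wᵀ = C ∧ Wᵀ * B * W = Matrix.diagonal d := by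
  obtain ⟨H, hH⟩ := CStarAlgebra.nonneg_iff_eq_star_mul_self.1 hC.nonneg
  have hD : (H * B * star H).IsHermitian := Matrix.isHermitian_mul_mul_conjTranspose H hB
  set U : Matrix m m ℝ := ↑hD.eigenvectorUnitary
  have hU : U * star U = 1 := Unitary.mul_star_self_of_mem hD.eigenvectorUnitary.2
  have hstar (M : Matrix m m ℝ) : star M = Mᵀ := Matrix.conjTranspose_eq_transpose_of_trivial M
  have hdiag := hD.conjStarAlgAut_star_eigenvectorUnitary
  rw [Unitary.conjStarAlgAut_star_apply, RCLike.ofReal_real_eq_id, Function.id_comp] at hdiag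
  refine ⟨star H * U, hD.eigenvalues, ?_, ?_⟩ <;> rw [← hstar, star_mul, star_star]
  · rw [mul_assoc, ← mul_assoc U, hU, one_mul, hH]
  · rw [← hdiag]
    simp only [mul_assoc, U]

lemma abs_le_norm_mul_norm_of_eq_diagonal {W : Matrix m m ℝ} {d : m → ℝ}
    (hW : W * Wᵀ = C) (hd : Wᵀ * B * W = Matrix.diagonal d) (i : m) : |d i| ≤ ‖B‖ * ‖C‖ := by
  have hstar : Wᵀ = star W := (Matrix.conjTranspose_eq_transpose_of_trivial W).symm
  calc |d i| ≤ ‖d‖ := norm_le_pi_norm d i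
    _ = ‖Wᵀ * B * W‖ := by rw [hd, Matrix.l2_opNorm_diagonal]
    _ ≤ ‖Wᵀ‖ * ‖B‖ * ‖W‖ := (norm_mul_le _ _).trans (by gcongr; exact norm_mul_le _ _)
    _ = ‖B‖ * ‖C‖ := by rw [← hW, hstar, CStarRing.norm_self_mul_star, norm_star]; ring

lemma dotProduct_mulVec_self_le (M : Matrix m m ℝ) (y : m → ℝ) :
    y ⬝ᵥ M *ᵥ y ≤ ‖M‖ * (y ⬝ᵥ y) := by
  set x : EuclideanSpace ℝ m := WithLp.toLp 2 y
  calc y ⬝ᵥ M *ᵥ y = inner ℝ (Matrix.toEuclideanCLM (𝕜 := ℝ) M x) x := by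
        simp [x, PiLp.inner_apply, dotProduct]
    _ ≤ ‖Matrix.toEuclideanCLM (𝕜 := ℝ) M x‖ * ‖x‖ := real_inner_le_norm _ _
    _ ≤ ‖M‖ * ‖x‖ * ‖x‖ := by gcongr; exact ContinuousLinearMap.le_opNorm _ _
    _ = ‖M‖ * (y ⬝ᵥ y) := by
        rw [mul_assoc, ← sq, EuclideanSpace.real_norm_sq_eq]
        simp [x, dotProduct, sq]

lemma trace_transpose_mul_mul_le (M X : Matrix m m ℝ) :
    (Xᵀ * M * X).trace ≤ ‖M‖ * (Xᵀ * X).trace := by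
  have hcol (N : Matrix m m ℝ) : (Xᵀ * N * X).trace = ∑ i, Xᵀ i ⬝ᵥ N *ᵥ Xᵀ i := by
    refine Finset.sum_congr rfl fun i _ ↦ ?_
    rw [Matrix.mul_assoc]
    rfl
  have hone := hcol 1
  simp only [Matrix.mul_one, Matrix.one_mulVec] at hone
  rw [hcol, hone, Finset.mul_sum]
  exact Finset.sum_le_sum fun i _ ↦ dotProduct_mulVec_self_le M _

lemma trace_mul_mul_mul_le (hC : C.PosSemidef) (hB : B.IsHermitian) :
    (B * C * (B * C)).trace ≤ ‖C‖ * (B * B * C).trace := by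
  obtain ⟨W, _, rfl, -⟩ := exists_mul_transpose_eq_and_eq_diagonal hC hB
  have hcycle : (B * (W * Wᵀ) * (B * (W * Wᵀ))).trace =
      ((B * W)ᵀ * (W * Wᵀ) * (B * W)).trace := by
    rw [Matrix.transpose_mul, ← Matrix.conjTranspose_eq_transpose_of_trivial B, hB.eq,
      ← Matrix.mul_assoc B W, ← Matrix.mul_assoc (B * W * Wᵀ) (B * W), Matrix.trace_mul_comm]
    simp only [Matrix.mul_assoc]
  rw [hcycle, trace_mul_self_mul_mul_transpose hB]
  exact trace_transpose_mul_mul_le _ _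

end OperatorNorm

section QuadraticForm

variable {n p : ℕ} {B C : Matrix (Fin p) (Fin p) ℝ}

lemma trace_mul_sampleCov (B : Matrix (Fin p) (Fin p) ℝ) (X : Fin n → Fin p → ℝ) :
    (B * sampleCov X).trace = (n : ℝ)⁻¹ * ∑ k, X k ⬝ᵥ B *ᵥ X k := by
  have hcov : sampleCov X = (n : ℝ)⁻¹ • ∑ k, Matrix.vecMulVec (X k) (X k) := rfl
  rw [hcov, Matrix.mul_smul, Matrix.trace_smul, smul_eq_mul, Finset.mul_sum, Matrix.trace_sum]
  refine congrArg _ (Finset.sum_congr rfl fun k _ ↦ ?_)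
  rw [Matrix.mul_vecMulVec, Matrix.trace_vecMulVec, dotProduct_comm]

lemma mulVec_dotProduct_mulVec_of_eq_diagonal {W : Matrix (Fin p) (Fin p) ℝ} {d : Fin p → ℝ}
    (hd : Wᵀ * B * W = Matrix.diagonal d) (z : Fin p → ℝ) :
    (W *ᵥ z) ⬝ᵥ B *ᵥ (W *ᵥ z) = ∑ i, d i * z i ^ 2 := by
  rw [← Matrix.vecMul_transpose, ← Matrix.dotProduct_mulVec, Matrix.vecMul_transpose,
    Matrix.mulVec_mulVec, Matrix.mulVec_mulVec, hd]
  exact Finset.sum_congr rfl fun i _ ↦ by rw [Matrix.mulVec_diagonal]; ring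

lemma trace_mul_eq_sum_of_eq_diagonal {W : Matrix (Fin p) (Fin p) ℝ} {d : Fin p → ℝ}
    (hd : Wᵀ * B * W = Matrix.diagonal d) : (B * (W * Wᵀ)).trace = ∑ i, d i := by
  rw [← Matrix.mul_assoc, Matrix.trace_mul_comm, ← Matrix.mul_assoc, hd, Matrix.trace_diagonal]

lemma trace_mul_mul_mul_eq_sum_sq_of_eq_diagonal {W : Matrix (Fin p) (Fin p) ℝ} {d : Fin p → ℝ}
    (hd : Wᵀ * B * W = Matrix.diagonal d) :
    (B * (W * Wᵀ) * (B * (W * Wᵀ))).trace = ∑ i, d i ^ 2 := by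
  have hcycle : (B * (W * Wᵀ) * (B * (W * Wᵀ))).trace = (Wᵀ * B * W * (Wᵀ * B * W)).trace := by
    rw [← Matrix.mul_assoc B W, ← Matrix.mul_assoc (B * W * Wᵀ) (B * W), Matrix.trace_mul_comm]
    simp only [Matrix.mul_assoc]
  rw [hcycle, hd, Matrix.diagonal_mul_diagonal, Matrix.trace_diagonal]
  exact Finset.sum_congr rfl fun i _ ↦ (sq _).symm

lemma hasLaw_eval_eval_pi_pi_gaussianReal (q : Fin n × Fin p) :
    HasLaw (fun Z : Fin n → Fin p → ℝ ↦ Z q.1 q.2) (gaussianReal 0 1)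
      (Measure.pi fun _ ↦ Measure.pi fun _ ↦ gaussianReal 0 1) :=
  ((measurePreserving_eval (fun _ ↦ gaussianReal 0 1) q.2).comp
    (measurePreserving_eval (fun _ ↦ Measure.pi fun _ ↦ gaussianReal 0 1) q.1)).hasLaw

lemma iIndepFun_eval_eval_pi_pi_gaussianReal :
    iIndepFun (fun (q : Fin n × Fin p) (Z : Fin n → Fin p → ℝ) ↦ Z q.1 q.2)
      (Measure.pi fun _ ↦ Measure.pi fun _ ↦ gaussianReal 0 1) := by
  have h := iIndepFun_uncurry_infinitePi' (ι := Fin n) (κ := Fin p)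
    (X := fun _ _ (x : ℝ) ↦ x) (fun _ _ ↦ gaussianReal 0 1) fun _ _ ↦ measurable_id
  simpa only [Measure.infinitePi_eq_pi] using h

lemma trace_mul_sampleCov_mulVec {W : Matrix (Fin p) (Fin p) ℝ} {d : Fin p → ℝ}
    (hd : Wᵀ * B * W = Matrix.diagonal d) (Z : Fin n → Fin p → ℝ) :
    (B * sampleCov fun k ↦ W *ᵥ Z k).trace =
      ∑ q : Fin n × Fin p, d q.2 / n * Z q.1 q.2 ^ 2 := by
  simp only [trace_mul_sampleCov, mulVec_dotProduct_mulVec_of_eq_diagonal hd, Finset.mul_sum,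
    Fintype.sum_prod_type]
  exact Finset.sum_congr rfl fun k _ ↦ Finset.sum_congr rfl fun i _ ↦ by ring

lemma measurableSet_trace_mul_sampleCov_le (B : Matrix (Fin p) (Fin p) ℝ) (a : ℝ) :
    MeasurableSet {X : Fin n → Fin p → ℝ | (B * sampleCov X).trace ≤ a} := by
  simp only [trace_mul_sampleCov, dotProduct, Matrix.mulVec]
  exact measurableSet_le (by fun_prop) measurable_const

lemma sum_fin_prod_div (hn : 0 < n) (f : Fin p → ℝ) :
    ∑ q : Fin n × Fin p, f q.2 / n = ∑ i, f i := by
  have hn' : (n : ℝ) ≠ 0 := Nat.cast_ne_zero.2 hn.ne'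
  simp only [Fintype.sum_prod_type, ← Finset.sum_div]
  rw [Finset.sum_const, Finset.card_univ, Fintype.card_fin, nsmul_eq_mul,
    mul_div_cancel_left₀ _ hn']

theorem iidGaussian_trace_mul_sampleCov_le (hn : 0 < n) (hC : C.PosDef) (hB : B.IsHermitian)
    {ν b r : ℝ} (hν : 0 < ν) (hr : 0 ≤ r) (hBCν : (B * C * (B * C)).trace ≤ ν ^ 2)
    (hBCb : ‖B‖ * ‖C‖ ≤ b) :
    iidGaussian n p C {X | (B * sampleCov X).trace ≤ (B * C).trace - 2 * ν * r - 2 * b * r ^ 2} ≤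
      ENNReal.ofReal (Real.exp (-(n * r ^ 2))) := by
  obtain ⟨W, d, rfl, hd⟩ := exists_mul_transpose_eq_and_eq_diagonal hC.posSemidef hB
  have hW : W.det ≠ 0 := fun h ↦ hC.det_pos.ne' (by rw [Matrix.det_mul, h, zero_mul])
  have hn' : (0 : ℝ) < n := Nat.cast_pos.2 hn
  have hsq : √(n : ℝ) ^ 2 = n := Real.sq_sqrt hn'.le
  have hb : 0 ≤ b := (by positivity : 0 ≤ ‖B‖ * ‖W * Wᵀ‖).trans hBCb
  have hdb (q : Fin n × Fin p) : |d q.2 / n| ≤ b / n := by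
    rw [abs_div, Nat.abs_cast]
    gcongr
    exact (abs_le_norm_mul_norm_of_eq_diagonal rfl hd q.2).trans hBCb
  have hdν : ∑ q : Fin n × Fin p, (d q.2 / n) ^ 2 ≤ (ν / √n) ^ 2 := by
    rw [trace_mul_mul_mul_eq_sum_sq_of_eq_diagonal hd] at hBCν
    simp only [div_pow, hsq, sq (n : ℝ), ← div_div (_ ^ 2) (n : ℝ)]
    rw [sum_fin_prod_div hn fun i ↦ d i ^ 2 / n, ← Finset.sum_div]
    gcongr
  have htail := measureReal_sum_mul_sq_le_le_exp hasLaw_eval_eval_pi_pi_gaussianReal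
    iIndepFun_eval_eval_pi_pi_gaussianReal (r := √n * r) (by positivity) (by positivity)
    (by positivity) hdb hdν
  have hlinear : 2 * (ν / √n) * (√n * r) = 2 * ν * r := by field_simp
  have hquadratic : 2 * (b / n) * (√n * r) ^ 2 = 2 * b * r ^ 2 := by
    rw [mul_pow, hsq]; field_simp
  simp only [← trace_mul_sampleCov_mulVec hd] at htail
  rw [sum_fin_prod_div hn, ← trace_mul_eq_sum_of_eq_diagonal hd, hlinear, hquadratic, mul_pow,
    hsq] at htail
  have hmeas : Measurable fun (Z : Fin n → Fin p → ℝ) k ↦ W *ᵥ Z k :=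
    measurable_pi_lambda _ fun k ↦ (measurable_mulVec W).comp (measurable_pi_apply k)
  rw [iidGaussian_mul_transpose n hW,
    Measure.map_apply hmeas (measurableSet_trace_mul_sampleCov_le B _), ← ofReal_measureReal]
  exact ENNReal.ofReal_le_ofReal htail

end QuadraticForm

section LagMatrix

variable {p j : ℕ}

/-- The symmetric Toeplitz matrix whose entries on the `d`-th upper and lower diagonals are `v d`.
The values of `v` from `p` on are irrelevant. -/
def toeplitz (p : ℕ) (v : ℕ → ℝ) : Matrix (Fin p) (Fin p) ℝ :=
  Matrix.of fun i k ↦ v ((i : ℤ) - (k : ℤ)).natAbs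

lemma toeplitz_apply_comm (v : ℕ → ℝ) (i k : Fin p) : toeplitz p v i k = toeplitz p v k i := by
  rw [toeplitz, Matrix.of_apply, Matrix.of_apply, ← Int.natAbs_neg, neg_sub]

lemma toeplitz_single_zero_one (p : ℕ) : toeplitz p (Pi.single 0 1) = 1 := by
  ext i k
  simp [toeplitz, Matrix.one_apply, Pi.single_apply, sub_eq_zero, Fin.ext_iff]

/-- The indices at distance exactly `j` from `i`, that is, the support of the `i`-th row of
`lagMatrix p j`. -/
def lagNeighbors (j : ℕ) (i : Fin p) : Finset (Fin p) :=
  {k | ((i : ℤ) - (k : ℤ)).natAbs = j}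

lemma mem_lagNeighbors {i k : Fin p} : k ∈ lagNeighbors j i ↔ ((i : ℤ) - (k : ℤ)).natAbs = j := by
  simp [lagNeighbors]

lemma card_lagNeighbors_le_two (j : ℕ) (i : Fin p) : (lagNeighbors j i).card ≤ 2 := by
  have hsub : (lagNeighbors j i).image Fin.val ⊆ {(i : ℕ) + j, (i : ℕ) - j} := by
    simp only [Finset.subset_iff, Finset.mem_image, mem_lagNeighbors, Finset.mem_insert,
      Finset.mem_singleton]
    omega
  rw [← Finset.card_image_of_injective _ Fin.val_injective]
  exact (Finset.card_le_card hsub).trans Finset.card_le_two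

lemma sum_sum_fin_ite_eq_add (p j : ℕ) :
    ∑ i : Fin p, ∑ k : Fin p, (if (k : ℕ) = i + j then 1 else 0) = p - j := by
  have hrow (i : Fin p) :
      ∑ k : Fin p, (if (k : ℕ) = i + j then 1 else 0) = if (i : ℕ) + j < p then 1 else 0 := by
    rw [Fin.sum_univ_eq_sum_range (fun k ↦ if k = (i : ℕ) + j then 1 else 0) p]
    simp
  have hfilter : (Finset.range p).filter (fun i ↦ i + j < p) = Finset.range (p - j) := by
    ext i
    simp only [Finset.mem_filter, Finset.mem_range]
    omega
  rw [Finset.sum_congr rfl fun i _ ↦ hrow i,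
    Fin.sum_univ_eq_sum_range (fun i ↦ if i + j < p then 1 else 0) p, ← Finset.card_filter,
    hfilter, Finset.card_range]

lemma sum_card_lagNeighbors (hj : 1 ≤ j) :
    ∑ i : Fin p, (lagNeighbors j i).card = 2 * (p - j) := by
  have hcard (i : Fin p) : (lagNeighbors j i).card =
      ∑ k : Fin p, ((if (k : ℕ) = i + j then 1 else 0) + if (i : ℕ) = k + j then 1 else 0) := by
    rw [lagNeighbors, Finset.card_filter]
    refine Finset.sum_congr rfl fun k _ ↦ ?_
    split_ifs <;> omega
  simp only [hcard, Finset.sum_add_distrib, sum_sum_fin_ite_eq_add]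
  rw [Finset.sum_comm, sum_sum_fin_ite_eq_add, two_mul]

lemma lagMatrix_mul_apply (j : ℕ) (M : Matrix (Fin p) (Fin p) ℝ) (i k : Fin p) :
    (lagMatrix p j * M) i k = 1 / (2 * ((p : ℝ) - j)) * ∑ l ∈ lagNeighbors j i, M l k := by
  simp only [Matrix.mul_apply, lagMatrix, Matrix.of_apply, ite_mul, zero_mul, lagNeighbors,
    Finset.sum_filter, Finset.mul_sum, mul_ite, mul_zero]

lemma isHermitian_lagMatrix (p j : ℕ) : (lagMatrix p j).IsHermitian := by
  ext i k
  simp only [Matrix.conjTranspose_apply, lagMatrix, Matrix.of_apply, star_trivial]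
  rw [← Int.natAbs_neg, neg_sub]

lemma sum_abs_lagMatrix_le (hjp : j < p) (i : Fin p) :
    ∑ k, |lagMatrix p j i k| ≤ 1 / ((p : ℝ) - j) := by
  have hpos : (0 : ℝ) < (p : ℝ) - j := sub_pos.2 (by exact_mod_cast hjp)
  have hcard : ((lagNeighbors j i).card : ℝ) ≤ 2 := by exact_mod_cast card_lagNeighbors_le_two j i
  calc ∑ k, |lagMatrix p j i k|
      = ∑ k ∈ lagNeighbors j i, 1 / (2 * ((p : ℝ) - j)) := by
        simp only [lagNeighbors, Finset.sum_filter]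
        refine Finset.sum_congr rfl fun k _ ↦ ?_
        rw [lagMatrix, Matrix.of_apply, apply_ite abs, abs_zero, abs_of_nonneg (by positivity)]
    _ = (lagNeighbors j i).card / (2 * ((p : ℝ) - j)) := by
        rw [Finset.sum_const, nsmul_eq_mul, mul_one_div]
    _ ≤ 2 / (2 * ((p : ℝ) - j)) := by gcongr
    _ = 1 / ((p : ℝ) - j) := by field_simp

lemma sum_abs_toeplitz_le (v : ℕ → ℝ) (i : Fin p) :
    ∑ k, |toeplitz p v i k| ≤ |v 0| + 2 * ∑ d ∈ Finset.Ico 1 p, |v d| := by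
  have hp : 0 < p := i.pos
  have hfiber : ∑ k, |toeplitz p v i k| =
      ∑ d ∈ Finset.range p, (lagNeighbors d i).card * |v d| := by
    rw [← Finset.sum_fiberwise_of_maps_to (g := fun k : Fin p ↦ ((i : ℤ) - k).natAbs)
      (t := Finset.range p) fun k _ ↦ Finset.mem_range.2 (by omega)]
    refine Finset.sum_congr rfl fun d _ ↦ ?_
    rw [← nsmul_eq_mul, ← Finset.sum_const]
    refine Finset.sum_congr rfl fun k hk ↦ ?_
    rw [toeplitz, Matrix.of_apply, (Finset.mem_filter.1 hk).2]
  have hzero : (lagNeighbors 0 i).card = 1 := by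
    rw [Finset.card_eq_one]
    exact ⟨i, by ext k; simp [mem_lagNeighbors, sub_eq_zero, Fin.ext_iff, eq_comm]⟩
  rw [hfiber, Finset.range_eq_Ico, Finset.sum_eq_sum_Ico_succ_bot hp, hzero, Nat.cast_one, one_mul,
    Finset.mul_sum]
  gcongr with d
  exact_mod_cast card_lagNeighbors_le_two d i

lemma trace_lagMatrix_mul_toeplitz (hj : 1 ≤ j) (hjp : j < p) (v : ℕ → ℝ) :
    (lagMatrix p j * toeplitz p v).trace = v j := by
  have hpos : (0 : ℝ) < (p : ℝ) - j := sub_pos.2 (by exact_mod_cast hjp)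
  have hdiag (i : Fin p) : (lagMatrix p j * toeplitz p v) i i =
      v j / (2 * ((p : ℝ) - j)) * (lagNeighbors j i).card := by
    have hconst : ∀ l ∈ lagNeighbors j i, toeplitz p v l i = v j := fun l hl ↦ by
      rw [toeplitz_apply_comm, toeplitz, Matrix.of_apply, mem_lagNeighbors.1 hl]
    rw [lagMatrix_mul_apply, Finset.sum_congr rfl hconst, Finset.sum_const, nsmul_eq_mul]
    ring
  simp only [Matrix.trace, Matrix.diag, hdiag, ← Finset.mul_sum, ← Nat.cast_sum,
    sum_card_lagNeighbors hj]
  rw [Nat.cast_mul, Nat.cast_sub hjp.le]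
  push_cast
  field_simp

lemma sum_lagNeighbors_toeplitz_le {i k : Fin p} (hj : 1 ≤ j) (hk : k ∈ lagNeighbors j i) :
    ∑ l ∈ lagNeighbors j k, toeplitz p v l i ≤ |v 0| + |v (2 * j)| := by
  rw [mem_lagNeighbors] at hk
  have hi : i ∈ lagNeighbors j k := mem_lagNeighbors.2 (by omega)
  have hrest : ∀ l ∈ (lagNeighbors j k).erase i, toeplitz p v l i ≤ |v (2 * j)| := fun l hl ↦ by
    obtain ⟨hli, hlk⟩ := Finset.mem_erase.1 hl
    have hdist : ((l : ℤ) - i).natAbs = 2 * j := by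
      have := mem_lagNeighbors.1 hlk
      have := Fin.val_ne_of_ne hli
      omega
    rw [toeplitz, Matrix.of_apply, hdist]
    exact le_abs_self _
  have hcard : ((lagNeighbors j k).erase i).card ≤ 1 := by
    rw [Finset.card_erase_of_mem hi]
    exact Nat.sub_le_of_le_add (card_lagNeighbors_le_two j k)
  rw [← Finset.add_sum_erase _ _ hi]
  gcongr
  · simpa [toeplitz] using le_abs_self (v 0)
  · refine (Finset.sum_le_card_nsmul _ _ _ hrest).trans ?_
    rw [nsmul_eq_mul]
    exact mul_le_of_le_one_left (abs_nonneg _) (by exact_mod_cast hcard)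

lemma trace_lagMatrix_mul_self_mul_toeplitz_le (hj : 1 ≤ j) (hjp : j < p) (v : ℕ → ℝ) :
    (lagMatrix p j * lagMatrix p j * toeplitz p v).trace ≤
      (|v 0| + |v (2 * j)|) / (2 * ((p : ℝ) - j)) := by
  have hpos : (0 : ℝ) < (p : ℝ) - j := sub_pos.2 (by exact_mod_cast hjp)
  set c : ℝ := 1 / (2 * ((p : ℝ) - j)) with hc
  have hc0 : 0 < c := by positivity
  have hdiag (i : Fin p) : (lagMatrix p j * (lagMatrix p j * toeplitz p v)) i i ≤
      c ^ 2 * (|v 0| + |v (2 * j)|) * (lagNeighbors j i).card := by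
    have hbound : ∀ k ∈ lagNeighbors j i, (lagMatrix p j * toeplitz p v) k i ≤
        c * (|v 0| + |v (2 * j)|) := fun k hk ↦ by
      rw [lagMatrix_mul_apply]
      gcongr
      exact sum_lagNeighbors_toeplitz_le hj hk
    rw [lagMatrix_mul_apply]
    refine (mul_le_mul_of_nonneg_left (Finset.sum_le_card_nsmul _ _ _ hbound) hc0.le).trans_eq ?_
    rw [nsmul_eq_mul]
    ring
  rw [Matrix.mul_assoc]
  refine (Finset.sum_le_sum fun i _ ↦ hdiag i).trans_eq ?_
  rw [← Finset.mul_sum, ← Nat.cast_sum, sum_card_lagNeighbors hj, Nat.cast_mul,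
    Nat.cast_sub hjp.le, hc]
  push_cast
  field_simp

end LagMatrix

section SignedLagSum

variable {n p j S : ℕ} {T : Finset ℕ} {ε v : ℕ → ℝ} {R ρ : ℝ}

lemma norm_lagMatrix_le (hjp : j < p) : ‖lagMatrix p j‖ ≤ 1 / ((p : ℝ) - j) := by
  have hpos : (0 : ℝ) < (p : ℝ) - j := sub_pos.2 (by exact_mod_cast hjp)
  refine l2_opNorm_le_of_forall_sum_abs_le (by positivity) (sum_abs_lagMatrix_le hjp) fun k ↦ ?_
  have hsymm (i : Fin p) : lagMatrix p j i k = lagMatrix p j k i :=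
    (isHermitian_lagMatrix p j).apply k i
  simpa only [hsymm] using sum_abs_lagMatrix_le hjp k

lemma norm_toeplitz_le (p : ℕ) (v : ℕ → ℝ) :
    ‖toeplitz p v‖ ≤ |v 0| + 2 * ∑ d ∈ Finset.Ico 1 p, |v d| := by
  refine l2_opNorm_le_of_forall_sum_abs_le (by positivity) (sum_abs_toeplitz_le v) fun k ↦ ?_
  simpa only [toeplitz_apply_comm v _ k] using sum_abs_toeplitz_le v k

lemma one_div_sub_natCast_le (hSp : S < p) (hjS : j ≤ S) :
    1 / ((p : ℝ) - j) ≤ 1 / ((p : ℝ) - S) :=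
  one_div_le_one_div_of_le (sub_pos.2 (by exact_mod_cast hSp)) (by gcongr)

lemma norm_sum_smul_lagMatrix_le (hSp : S < p) (hT : T ⊆ Finset.Icc 1 S)
    (hε : ∀ j ∈ T, |ε j| ≤ 1) :
    ‖∑ j ∈ T, ε j • lagMatrix p j‖ ≤ T.card / ((p : ℝ) - S) := by
  have hterm : ∀ j ∈ T, ‖ε j • lagMatrix p j‖ ≤ 1 / ((p : ℝ) - S) := fun j hj ↦ by
    have hjS : j ≤ S := (Finset.mem_Icc.1 (hT hj)).2
    calc ‖ε j • lagMatrix p j‖ ≤ 1 * (1 / ((p : ℝ) - j)) :=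
          (norm_smul_le _ _).trans
            (mul_le_mul (hε j hj) (norm_lagMatrix_le (hjS.trans_lt hSp)) (norm_nonneg _)
              zero_le_one)
      _ ≤ 1 / ((p : ℝ) - S) := (one_mul _).trans_le (one_div_sub_natCast_le hSp hjS)
  refine (norm_sum_le_of_le T hterm).trans_eq ?_
  rw [Finset.sum_const, nsmul_eq_mul, mul_one_div]

lemma trace_sq_sum_smul_lagMatrix_mul_toeplitz_le (hC : (toeplitz p v).PosDef) (hv0 : v 0 = 1)
    (hSp : S < p) (hT : T ⊆ Finset.Icc 1 S) (hε : ∀ j ∈ T, |ε j| ≤ 1) :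
    ((∑ j ∈ T, ε j • lagMatrix p j) * toeplitz p v *
        ((∑ j ∈ T, ε j • lagMatrix p j) * toeplitz p v)).trace ≤
      ‖toeplitz p v‖ * (T.card * (T.card + ∑ j ∈ T, |v (2 * j)|) / (2 * ((p : ℝ) - S))) := by
  have hA : ∀ j ∈ T, (lagMatrix p j).IsHermitian := fun j _ ↦ isHermitian_lagMatrix p j
  refine (trace_mul_mul_mul_le hC.posSemidef (isHermitian_sum_smul hA ε)).trans ?_
  refine mul_le_mul_of_nonneg_left ?_ (norm_nonneg _)
  have hterm : ∀ j ∈ T, (lagMatrix p j * lagMatrix p j * toeplitz p v).trace ≤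
      (1 + |v (2 * j)|) / (2 * ((p : ℝ) - S)) := fun j hj ↦ by
    obtain ⟨hj1, hjS⟩ := Finset.mem_Icc.1 (hT hj)
    have hpos : (0 : ℝ) < (p : ℝ) - S := sub_pos.2 (by exact_mod_cast hSp)
    have htrace := trace_lagMatrix_mul_self_mul_toeplitz_le hj1 (hjS.trans_lt hSp) v
    rw [hv0, abs_one] at htrace
    exact htrace.trans (by gcongr)
  calc ((∑ j ∈ T, ε j • lagMatrix p j) * (∑ j ∈ T, ε j • lagMatrix p j) * toeplitz p v).trace
      ≤ T.card * ∑ j ∈ T, (lagMatrix p j * lagMatrix p j * toeplitz p v).trace :=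
        trace_sum_smul_mul_self_mul_le hC.posSemidef hA hε
    _ ≤ T.card * ∑ j ∈ T, (1 + |v (2 * j)|) / (2 * ((p : ℝ) - S)) := by
        gcongr with j hj; exact hterm j hj
    _ = T.card * (T.card + ∑ j ∈ T, |v (2 * j)|) / (2 * ((p : ℝ) - S)) := by
        rw [← Finset.sum_div, Finset.sum_add_distrib, Finset.sum_const, nsmul_eq_mul, mul_one,
          mul_div_assoc]

lemma trace_sum_smul_lagMatrix_mul (T : Finset ℕ) (ε : ℕ → ℝ) (M : Matrix (Fin p) (Fin p) ℝ) :
    ((∑ j ∈ T, ε j • lagMatrix p j) * M).trace = ∑ j ∈ T, ε j * (lagMatrix p j * M).trace := by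
  simp only [Matrix.sum_mul, Matrix.trace_sum, Matrix.smul_mul, Matrix.trace_smul, smul_eq_mul]

lemma trace_lagMatrix_mul_sub_one (hj : 1 ≤ j) (hjp : j < p) (M : Matrix (Fin p) (Fin p) ℝ) :
    (lagMatrix p j * (M - 1)).trace = (lagMatrix p j * M).trace := by
  have hone : (lagMatrix p j * 1).trace = 0 := by
    rw [← toeplitz_single_zero_one, trace_lagMatrix_mul_toeplitz hj hjp, Pi.single_apply,
      if_neg (Nat.one_le_iff_ne_zero.1 hj)]
  rw [Matrix.mul_sub, Matrix.trace_sub, hone, sub_zero]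

theorem iidGaussian_sum_mul_trace_lagMatrix_le (hn : 0 < n) (hC : (toeplitz p v).PosDef)
    (hv0 : v 0 = 1) (hSp : S < p) (hT : T ⊆ Finset.Icc 1 S) (hT0 : T.Nonempty)
    (hε : ∀ j ∈ T, |ε j| ≤ 1) (hR0 : 0 < R) (hR : ‖toeplitz p v‖ ≤ R) (hρ : 0 ≤ ρ) :
    iidGaussian n p (toeplitz p v)
        {X | ∑ j ∈ T, ε j * (lagMatrix p j * (sampleCov X - 1)).trace ≤
          ∑ j ∈ T, ε j * v j -
            2 * T.card * √(R * (T.card + ∑ j ∈ T, |v (2 * j)|) / (2 * T.card)) * ρ -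
            2 * T.card * R * ρ ^ 2} ≤
      ENNReal.ofReal (Real.exp (-(n * ((p : ℝ) - S) * ρ ^ 2))) := by
  set N : ℝ := (p : ℝ) - S
  set s : ℝ := ↑T.card
  set Q : ℝ := ∑ j ∈ T, |v (2 * j)|
  have hN : 0 < N := sub_pos.2 (by exact_mod_cast hSp)
  have hs : 0 < s := Nat.cast_pos.2 hT0.card_pos
  have hQ : 0 ≤ Q := Finset.sum_nonneg fun j _ ↦ abs_nonneg _
  have hlag : ∀ j ∈ T, 1 ≤ j ∧ j < p := fun j hj ↦
    ⟨(Finset.mem_Icc.1 (hT hj)).1, (Finset.mem_Icc.1 (hT hj)).2.trans_lt hSp⟩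
  have hvar : ‖toeplitz p v‖ * (s * (s + Q) / (2 * N)) ≤
      (s * √(R * (s + Q) / (2 * s)) / √N) ^ 2 := by
    rw [div_pow, mul_pow, Real.sq_sqrt (by positivity), Real.sq_sqrt hN.le]
    refine (mul_le_mul_of_nonneg_right hR (by positivity)).trans_eq ?_
    field_simp
  have htail := iidGaussian_trace_mul_sampleCov_le (n := n) (r := √N * ρ) (b := s / N * R) hn hC
    (isHermitian_sum_smul (fun j _ ↦ isHermitian_lagMatrix p j) ε) (by positivity) (by positivity)
    ((trace_sq_sum_smul_lagMatrix_mul_toeplitz_le hC hv0 hSp hT hε).trans hvar)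
    (mul_le_mul (norm_sum_smul_lagMatrix_le hSp hT hε) hR (norm_nonneg _) (by positivity))
  simp only [trace_sum_smul_lagMatrix_mul] at htail
  have hmean : ∑ j ∈ T, ε j * (lagMatrix p j * toeplitz p v).trace = ∑ j ∈ T, ε j * v j :=
    Finset.sum_congr rfl fun j hj ↦ by
      rw [trace_lagMatrix_mul_toeplitz (hlag j hj).1 (hlag j hj).2]
  have hstat (X : Fin n → Fin p → ℝ) : ∑ j ∈ T, ε j * (lagMatrix p j * (sampleCov X - 1)).trace =
      ∑ j ∈ T, ε j * (lagMatrix p j * sampleCov X).trace :=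
    Finset.sum_congr rfl fun j hj ↦ by
      rw [trace_lagMatrix_mul_sub_one (hlag j hj).1 (hlag j hj).2]
  have hlinear (κ : ℝ) : 2 * (s * κ / √N) * (√N * ρ) = 2 * s * κ * ρ := by field_simp
  have hquadratic : 2 * (s / N * R) * (√N * ρ) ^ 2 = 2 * s * R * ρ ^ 2 := by
    rw [mul_pow, Real.sq_sqrt hN.le]; field_simp
  rw [hmean, hlinear, hquadratic, mul_pow, Real.sq_sqrt hN.le, ← mul_assoc] at htail
  simpa only [hstat] using htail

end SignedLagSum

section TypeI

variable {n p s S j : ℕ} {t ρ : ℝ}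

lemma iidGaussian_one_mul_trace_lagMatrix_le {ε : ℝ} (hn : 0 < n) (hj : 1 ≤ j) (hjp : j < p)
    (hε : |ε| ≤ 1) (hρ : 0 ≤ ρ) :
    iidGaussian n p 1 {X | ε * (lagMatrix p j * (sampleCov X - 1)).trace ≤
        -(√2 * ρ + 2 * ρ ^ 2)} ≤
      ENNReal.ofReal (Real.exp (-(n * ((p : ℝ) - j) * ρ ^ 2))) := by
  have hv (d : ℕ) (hd : 1 ≤ d) : (Pi.single 0 1 : ℕ → ℝ) d = 0 := by
    rw [Pi.single_apply, if_neg (Nat.one_le_iff_ne_zero.1 hd)]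
  have hnorm : ‖toeplitz p (Pi.single 0 1)‖ ≤ 1 := by
    refine (norm_toeplitz_le p _).trans_eq ?_
    rw [Finset.sum_eq_zero fun d hd ↦ by rw [hv d (Finset.mem_Ico.1 hd).1, abs_zero]]
    simp
  have htail := iidGaussian_sum_mul_trace_lagMatrix_le (n := n) (S := j) (T := {j})
    (ε := fun _ ↦ ε) hn (by rw [toeplitz_single_zero_one]; exact .one) (by simp) hjp
    (by simp [hj]) (by simp) (fun _ _ ↦ hε) one_pos hnorm hρ
  have hsqrt : 2 * √(1 / 2) = √2 := by
    rw [Real.sqrt_div zero_le_one, Real.sqrt_one, mul_one_div, Real.div_sqrt]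
  refine (measure_mono fun X hX ↦ ?_).trans (toeplitz_single_zero_one p ▸ htail)
  simp only [Set.mem_ofPred_eq, Finset.sum_singleton, Finset.card_singleton, hv j hj,
    hv (2 * j) (by omega), Nat.cast_one, abs_zero, add_zero, mul_one, mul_zero, hsqrt] at hX ⊢
  linarith

lemma iidGaussian_one_le_abs_trace_lagMatrix_le (hn : 0 < n) (hj : 1 ≤ j) (hjp : j < p)
    (hρ : 0 ≤ ρ) :
    iidGaussian n p 1
        {X | √2 * ρ + 2 * ρ ^ 2 ≤ |(lagMatrix p j * (sampleCov X - 1)).trace|} ≤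
      ENNReal.ofReal (2 * Real.exp (-(n * ((p : ℝ) - j) * ρ ^ 2))) := by
  rw [two_mul (Real.exp _), ENNReal.ofReal_add (Real.exp_nonneg _) (Real.exp_nonneg _)]
  refine le_trans (measure_mono fun X hX ↦ ?_) ((measure_union_le _ _).trans (add_le_add
    (iidGaussian_one_mul_trace_lagMatrix_le (ε := 1) hn hj hjp (by simp) hρ)
    (iidGaussian_one_mul_trace_lagMatrix_le (ε := -1) hn hj hjp (by simp) hρ)))
  have hle : √2 * ρ + 2 * ρ ^ 2 ≤ |(lagMatrix p j * (sampleCov X - 1)).trace| := hX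
  rcases le_abs.1 hle with h | h
  · right; simpa using h
  · left; simpa using le_neg_of_le_neg h

theorem iidGaussian_one_scan_reject_le (hn : 0 < n) (hs : 0 < s) (hSp : S < p) (hρ : 0 ≤ ρ)
    (ht : s * (√2 * ρ + 2 * ρ ^ 2) ≤ t) :
    iidGaussian n p 1 {X | ∃ T : Finset ℕ, T ⊆ Finset.Icc 1 S ∧ T.card = s ∧
        ∑ j ∈ T, |(lagMatrix p j * (sampleCov X - 1)).trace| ≥ t} ≤
      ENNReal.ofReal (S * (2 * Real.exp (-(n * ((p : ℝ) - S) * ρ ^ 2)))) := by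
  have hsub : {X : Fin n → Fin p → ℝ | ∃ T : Finset ℕ, T ⊆ Finset.Icc 1 S ∧ T.card = s ∧
      ∑ j ∈ T, |(lagMatrix p j * (sampleCov X - 1)).trace| ≥ t} ⊆ ⋃ j ∈ Finset.Icc 1 S,
        {X | √2 * ρ + 2 * ρ ^ 2 ≤ |(lagMatrix p j * (sampleCov X - 1)).trace|} := by
    rintro X ⟨T, hT, rfl, hX⟩
    obtain ⟨j, hj, hmj⟩ := Finset.exists_le_of_sum_le (Finset.card_pos.1 hs)
      (f := fun _ ↦ √2 * ρ + 2 * ρ ^ 2)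
      (by simpa only [Finset.sum_const, nsmul_eq_mul] using ht.trans hX)
    exact Set.mem_biUnion (hT hj) hmj
  have hlag : ∀ j ∈ Finset.Icc 1 S, iidGaussian n p 1
      {X | √2 * ρ + 2 * ρ ^ 2 ≤ |(lagMatrix p j * (sampleCov X - 1)).trace|} ≤
        ENNReal.ofReal (2 * Real.exp (-(n * ((p : ℝ) - S) * ρ ^ 2))) := fun j hj ↦ by
    obtain ⟨hj1, hjS⟩ := Finset.mem_Icc.1 hj
    refine (iidGaussian_one_le_abs_trace_lagMatrix_le hn hj1 (hjS.trans_lt hSp) hρ).trans ?_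
    gcongr
  refine (measure_mono hsub).trans ((measure_biUnion_finset_le _ _).trans
    ((Finset.sum_le_sum hlag).trans_eq ?_))
  rw [Finset.sum_const, Nat.card_Icc, Nat.add_sub_cancel, nsmul_eq_mul,
    ENNReal.ofReal_mul (Nat.cast_nonneg S), ENNReal.ofReal_natCast]

end TypeI

section ToeplitzPositivity

variable {p j : ℕ} {v : ℕ → ℝ}

lemma sum_mul_toeplitz_progression_nonneg {m : ℕ} (hC : (toeplitz p v).PosSemidef)
    (hp : ∀ a : Fin m, (a : ℕ) * j < p) (y : Fin m → ℝ) :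
    0 ≤ ∑ a, ∑ b, y a * y b * v (((a : ℤ) - (b : ℤ)).natAbs * j) := by
  have hquad := (hC.submatrix fun a : Fin m ↦ (⟨a * j, hp a⟩ : Fin p)).dotProduct_mulVec_nonneg y
  refine hquad.trans_eq ?_
  simp only [dotProduct, Matrix.mulVec, Finset.mul_sum, Pi.star_apply, star_trivial,
    Matrix.submatrix_apply, toeplitz, Matrix.of_apply]
  refine Finset.sum_congr rfl fun a _ ↦ Finset.sum_congr rfl fun b _ ↦ ?_
  rw [Nat.cast_mul, Nat.cast_mul, ← sub_mul, Int.natAbs_mul, Int.natAbs_natCast]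
  ring

lemma abs_le_one_of_posSemidef_toeplitz (hC : (toeplitz p v).PosSemidef) (hv0 : v 0 = 1)
    (hj : j < p) : |v j| ≤ 1 := by
  have hp (a : Fin 2) : (a : ℕ) * j < p := (Nat.mul_le_mul_right j a.is_le).trans_lt (by omega)
  have hplus : 0 ≤ 2 + 2 * v j := by
    refine (sum_mul_toeplitz_progression_nonneg hC hp ![1, 1]).trans_eq ?_
    simp [Fin.sum_univ_two, hv0]; ring
  have hminus : 0 ≤ 2 - 2 * v j := by
    refine (sum_mul_toeplitz_progression_nonneg hC hp ![1, -1]).trans_eq ?_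
    simp [Fin.sum_univ_two, hv0]; ring
  exact abs_le.2 ⟨by linarith, by linarith⟩

-- The test vectors use `3 / 2` in place of `√2`, which would give the sharp constant `1 / √2`.
lemma abs_le_of_posSemidef_toeplitz_of_two_mul_eq_zero (hC : (toeplitz p v).PosSemidef)
    (hv0 : v 0 = 1) (hj : 2 * j < p) (hv2 : v (2 * j) = 0) : |v j| ≤ 17 / 24 := by
  have hp (a : Fin 3) : (a : ℕ) * j < p := (Nat.mul_le_mul_right j a.is_le).trans_lt hj
  have hplus : 0 ≤ 17 / 4 + 6 * v j := by
    refine (sum_mul_toeplitz_progression_nonneg hC hp ![1, 3 / 2, 1]).trans_eq ?_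
    simp [Fin.sum_univ_three, hv0, hv2]; ring
  have hminus : 0 ≤ 17 / 4 - 6 * v j := by
    refine (sum_mul_toeplitz_progression_nonneg hC hp ![1, -(3 / 2), 1]).trans_eq ?_
    simp [Fin.sum_univ_three, hv0, hv2]; ring
  exact abs_le.2 ⟨by linarith, by linarith⟩

lemma abs_add_abs_two_mul_le_of_posSemidef_toeplitz (hC : (toeplitz p v).PosSemidef)
    (hv0 : v 0 = 1) (hj : 4 * j < p) (hv3 : v (3 * j) = 0) (hv4 : v (4 * j) = 0) :
    |v j| + |v (2 * j)| ≤ 5 / 4 := by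
  have hp (a : Fin 5) : (a : ℕ) * j < p := (Nat.mul_le_mul_right j a.is_le).trans_lt hj
  have hsub_le : 0 ≤ 10 + 8 * v j - 8 * v (2 * j) := by
    refine (sum_mul_toeplitz_progression_nonneg hC hp ![1, 2, 0, -2, -1]).trans_eq ?_
    simp [Fin.sum_univ_five, hv0, hv3, hv4]; ring
  have hadd_le : 0 ≤ 10 - 8 * v j - 8 * v (2 * j) := by
    refine (sum_mul_toeplitz_progression_nonneg hC hp ![1, -2, 0, 2, -1]).trans_eq ?_
    simp [Fin.sum_univ_five, hv0, hv3, hv4]; ring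
  have hle_add : 0 ≤ 9 / 4 + 2 * v j + 2 * v (2 * j) := by
    refine (sum_mul_toeplitz_progression_nonneg hC hp ![1, 1 / 2, 1, 0, 0]).trans_eq ?_
    simp [Fin.sum_univ_five, hv0, hv3, hv4]; ring
  have hle_sub : 0 ≤ 9 / 4 - 2 * v j + 2 * v (2 * j) := by
    refine (sum_mul_toeplitz_progression_nonneg hC hp ![1, -(1 / 2), 1, 0, 0]).trans_eq ?_
    simp [Fin.sum_univ_five, hv0, hv3, hv4]; ring
  obtain ⟨hj_abs, -⟩ | ⟨hj_abs, -⟩ := abs_cases (v j) <;>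
    obtain ⟨h2j_abs, -⟩ | ⟨h2j_abs, -⟩ := abs_cases (v (2 * j)) <;>
    rw [hj_abs, h2j_abs] <;> linarith

end ToeplitzPositivity

section SparseToeplitz

variable {p S j : ℕ} {T : Finset ℕ} {v : ℕ → ℝ}

lemma norm_toeplitz_le_one_add (hv0 : v 0 = 1) (hvT : ∀ j, 1 ≤ j → j < p → j ∉ T → v j = 0) :
    ‖toeplitz p v‖ ≤ 1 + 2 * ∑ j ∈ T, |v j| := by
  refine (norm_toeplitz_le p v).trans ?_
  rw [hv0, abs_one]
  gcongr 1 + 2 * ?_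
  rw [← Finset.sum_filter_ne_zero]
  refine Finset.sum_le_sum_of_subset_of_nonneg (fun d hd ↦ ?_) fun _ _ _ ↦ abs_nonneg _
  obtain ⟨hdp, hvd⟩ := Finset.mem_filter.1 hd
  obtain ⟨hd1, hdp⟩ := Finset.mem_Ico.1 hdp
  by_contra hdT
  exact hvd (by rw [hvT d hd1 hdp hdT, abs_zero])

lemma sum_le_card_sub {ι : Type*} {T : Finset ι} {f : ι → ℝ} {c : ℝ} {k : ι}
    (hf : ∀ i ∈ T, f i ≤ 1) (hk : k ∈ T) (hfk : f k ≤ 1 - c) : ∑ i ∈ T, f i ≤ T.card - c := by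
  classical
  have hrest : ∑ i ∈ T.erase k, f i ≤ (T.erase k).card := by
    simpa using Finset.sum_le_card_nsmul _ _ 1 fun i hi ↦ hf i (Finset.mem_of_mem_erase hi)
  rw [← Finset.add_sum_erase _ _ hk, ← Finset.card_erase_add_one hk, Nat.cast_add_one]
  linarith

lemma exists_mem_two_mul_notMem (hT : T ⊆ Finset.Icc 1 S) (hT0 : T.Nonempty) :
    ∃ k ∈ T, 2 * k ∉ T := by
  refine ⟨T.max' hT0, T.max'_mem hT0, fun h ↦ ?_⟩
  have := (Finset.mem_Icc.1 (hT (T.max'_mem hT0))).1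
  have := T.le_max' _ h
  omega

lemma eq_zero_and_abs_le_of_two_mul_notMem (hC : (toeplitz p v).PosSemidef) (hv0 : v 0 = 1)
    (hSp : 2 * S < p) (hT : T ⊆ Finset.Icc 1 S) (hvT : ∀ j, 1 ≤ j → j < p → j ∉ T → v j = 0)
    (hj : j ∈ T) (h2j : 2 * j ∉ T) : v (2 * j) = 0 ∧ |v j| ≤ 17 / 24 := by
  obtain ⟨hj1, hjS⟩ := Finset.mem_Icc.1 (hT hj)
  have hv2 : v (2 * j) = 0 := hvT _ (by omega) (by omega) h2j
  exact ⟨hv2, abs_le_of_posSemidef_toeplitz_of_two_mul_eq_zero hC hv0 (by omega) hv2⟩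

lemma sum_abs_le_card_sub (hC : (toeplitz p v).PosSemidef) (hv0 : v 0 = 1)
    (hSp : 2 * S < p) (hT : T ⊆ Finset.Icc 1 S) (hvT : ∀ j, 1 ≤ j → j < p → j ∉ T → v j = 0)
    (hT0 : T.Nonempty) : ∑ j ∈ T, |v j| ≤ T.card - 7 / 24 := by
  obtain ⟨k, hkT, h2k⟩ := exists_mem_two_mul_notMem hT hT0
  refine sum_le_card_sub (fun j hj ↦ abs_le_one_of_posSemidef_toeplitz hC hv0 ?_) hkT
    ((eq_zero_and_abs_le_of_two_mul_notMem hC hv0 hSp hT hvT hkT h2k).2.trans (by norm_num))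
  have := (Finset.mem_Icc.1 (hT hj)).2
  omega

lemma sum_abs_two_mul_le_card_sub (hC : (toeplitz p v).PosSemidef) (hv0 : v 0 = 1)
    (hSp : 2 * S < p) (hT : T ⊆ Finset.Icc 1 S) (hvT : ∀ j, 1 ≤ j → j < p → j ∉ T → v j = 0)
    (hT2 : 2 ≤ T.card) : ∑ j ∈ T, |v (2 * j)| ≤ T.card - 31 / 24 := by
  have hlast {j : ℕ} (hj : j ∈ T) (h2j : 2 * j ∉ T) :=
    eq_zero_and_abs_le_of_two_mul_notMem hC hv0 hSp hT hvT hj h2j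
  obtain ⟨k, hkT, h2k⟩ :=
    exists_mem_two_mul_notMem hT (Finset.card_pos.1 (by omega))
  have hT' : T.erase k ⊆ Finset.Icc 1 S := (Finset.erase_subset k T).trans hT
  have hcard : (T.erase k).card + 1 = T.card := Finset.card_erase_add_one hkT
  obtain ⟨b, hb, h2b⟩ :=
    exists_mem_two_mul_notMem hT' (Finset.card_pos.1 (by omega))
  have hvb : |v (2 * b)| ≤ 1 - 7 / 24 := by
    rcases eq_or_ne (2 * b) k with hbk | hbk
    · rw [hbk]
      exact (hlast hkT h2k).2.trans (by norm_num)
    · rw [(hlast (Finset.mem_of_mem_erase hb) fun h ↦ h2b (Finset.mem_erase.2 ⟨hbk, h⟩)).1]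
      norm_num
  have hle_one : ∀ j ∈ T.erase k, |v (2 * j)| ≤ 1 := fun j hj ↦
    abs_le_one_of_posSemidef_toeplitz hC hv0 (by have := (Finset.mem_Icc.1 (hT' hj)).2; omega)
  have hrest := sum_le_card_sub hle_one hb hvb
  rw [← Finset.add_sum_erase _ _ hkT, (hlast hkT h2k).1, abs_zero, zero_add, ← hcard,
    Nat.cast_add_one]
  linarith

lemma sum_abs_le_of_card_eq_two (hC : (toeplitz p v).PosSemidef) (hv0 : v 0 = 1)
    (hSp : 2 * S < p) (hT : T ⊆ Finset.Icc 1 S) (hvT : ∀ j, 1 ≤ j → j < p → j ∉ T → v j = 0)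
    (hT2 : T.card = 2) :
    (∑ j ∈ T, |v j| ≤ 5 / 4 ∧ ∑ j ∈ T, |v (2 * j)| ≤ 1) ∨
      (∑ j ∈ T, |v j| ≤ 17 / 12 ∧ ∑ j ∈ T, |v (2 * j)| ≤ 0) := by
  have hlast {j : ℕ} (hj : j ∈ T) (h2j : 2 * j ∉ T) :=
    eq_zero_and_abs_le_of_two_mul_notMem hC hv0 hSp hT hvT hj h2j
  obtain ⟨k, hkT, h2k⟩ :=
    exists_mem_two_mul_notMem hT (Finset.card_pos.1 (by omega))
  obtain ⟨a, ha⟩ : ∃ a, T.erase k = {a} :=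
    Finset.card_eq_one.1 (by rw [Finset.card_erase_of_mem hkT, hT2])
  have haT : a ∈ T := Finset.mem_of_mem_erase (ha ▸ Finset.mem_singleton_self a)
  have hmem {j : ℕ} (hj : j ∈ T) : j = k ∨ j = a := by
    rw [← Finset.insert_erase hkT, ha] at hj
    simpa using hj
  obtain ⟨ha1, haS⟩ := Finset.mem_Icc.1 (hT haT)
  obtain ⟨hk1, hkS⟩ := Finset.mem_Icc.1 (hT hkT)
  have hvk := hlast hkT h2k
  simp only [← Finset.add_sum_erase _ _ hkT, ha, Finset.sum_singleton, hvk.1, abs_zero, zero_add]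
  by_cases hak : 2 * a = k
  · have hnotMem {i : ℕ} (hi : 2 < i) : i * a ∉ T := fun h ↦ by
      rcases hmem h with h | h
      · exact hi.ne' (Nat.eq_of_mul_eq_mul_right ha1 (h.trans hak.symm))
      · exact (show i ≠ 1 by omega) (Nat.eq_of_mul_eq_mul_right ha1 (h.trans (one_mul a).symm))
    have hsum := abs_add_abs_two_mul_le_of_posSemidef_toeplitz hC hv0 (by omega)
      (hvT (3 * a) (by omega) (by omega) (hnotMem (by norm_num)))
      (hvT (4 * a) (by omega) (by omega) (hnotMem (by norm_num)))
    rw [hak] at hsum ⊢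
    exact .inl ⟨by linarith, abs_le_one_of_posSemidef_toeplitz hC hv0 (by omega)⟩
  · have hva := hlast haT fun h ↦ by rcases hmem h with h | h <;> omega
    rw [hva.1, abs_zero]
    exact .inr ⟨by linarith [hva.2, hvk.2], le_rfl⟩

lemma sqrt_add_le_of_le {s M Q κ M₁ Q₁ : ℝ} (hs : 0 < s) (hM0 : 0 ≤ M) (hκ : 0 ≤ κ)
    (hQ0 : 0 ≤ Q) (hM : M ≤ M₁) (hQ : Q ≤ Q₁) (hvar : (1 + 2 * M₁) * (s + Q₁) ≤ 2 * s * κ ^ 2)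
    (hnorm : (1 + 2 * M₁) * M₁ ≤ (s - κ) * (2 * s * (s + 1))) :
    √((1 + 2 * M) * (s + Q) / (2 * s)) + (1 + 2 * M) * M / (2 * s * (s + 1)) ≤ s := by
  have hM₁ : 0 ≤ M₁ := hM0.trans hM
  have hsqrt : √((1 + 2 * M) * (s + Q) / (2 * s)) ≤ κ := by
    rw [Real.sqrt_le_left hκ, div_le_iff₀ (by positivity), mul_comm (κ ^ 2)]
    exact le_trans (by gcongr) hvar
  have hdiv : (1 + 2 * M) * M / (2 * s * (s + 1)) ≤ s - κ := by
    rw [div_le_iff₀ (by positivity)]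
    exact le_trans (by gcongr) hnorm
  linarith

lemma sqrt_add_le_of_three_le {s M Q : ℝ} (hs : 3 ≤ s) (hM0 : 0 ≤ M) (hQ0 : 0 ≤ Q)
    (hM : M ≤ s - 7 / 24) (hQ : Q ≤ s - 31 / 24) :
    √((1 + 2 * M) * (s + Q) / (2 * s)) + (1 + 2 * M) * M / (2 * s * (s + 1)) ≤ s := by
  have hs0 : 0 < s := by linarith
  -- This `κ` is `9 / 4` at `s = 3` and keeps `s - κ` close to `1` for large `s`.
  refine sqrt_add_le_of_le (κ := s - 1 + 3 / (4 * s)) hs0 hM0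
    (add_nonneg (by linarith) (by positivity)) hQ0 hM hQ ?_ ?_
  · have hsq : 2 * s * (s - 1 + 3 / (4 * s)) ^ 2 = 2 * (s ^ 2 - s + 3 / 4) ^ 2 / s := by
      field_simp
    rw [hsq, le_div_iff₀ hs0]
    obtain ⟨x, hx, rfl⟩ : ∃ x, 0 ≤ x ∧ s = 3 + x := ⟨s - 3, by linarith, by ring⟩
    have := pow_nonneg hx 2
    have := pow_nonneg hx 3
    have := pow_nonneg hx 4
    linarith
  · have hmul : (s - (s - 1 + 3 / (4 * s))) * (2 * s * (s + 1)) = (2 * s - 3 / 2) * (s + 1) := by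
      field_simp
      ring
    rw [hmul]
    linarith

-- In units of `2 s ρ`, the left side is the deviation of the scan statistic at the largest `ρ` that
-- the signal condition allows, `M / (2 s (s + 1))`.
lemma sqrt_add_le_card_of_posSemidef_toeplitz (hC : (toeplitz p v).PosSemidef) (hv0 : v 0 = 1)
    (hSp : 2 * S < p) (hT : T ⊆ Finset.Icc 1 S) (hvT : ∀ j, 1 ≤ j → j < p → j ∉ T → v j = 0)
    (hT2 : 2 ≤ T.card) :
    √((1 + 2 * ∑ j ∈ T, |v j|) * (T.card + ∑ j ∈ T, |v (2 * j)|) / (2 * T.card)) +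
      (1 + 2 * ∑ j ∈ T, |v j|) * (∑ j ∈ T, |v j|) / (2 * T.card * (T.card + 1)) ≤ T.card := by
  have hM0 : 0 ≤ ∑ j ∈ T, |v j| := by positivity
  have hQ0 : 0 ≤ ∑ j ∈ T, |v (2 * j)| := by positivity
  have hs : (0 : ℝ) < T.card := by exact_mod_cast (by omega : 0 < T.card)
  rcases hT2.eq_or_lt with htwo | hthree
  · have hcard : (T.card : ℝ) = 2 := by exact_mod_cast htwo.symm
    obtain ⟨hM, hQ⟩ | ⟨hM, hQ⟩ := sum_abs_le_of_card_eq_two hC hv0 hSp hT hvT htwo.symm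
    · refine sqrt_add_le_of_le (κ := 13 / 8) hs hM0 (by norm_num) hQ0 hM hQ ?_ ?_ <;>
        norm_num [hcard]
    · refine sqrt_add_le_of_le (κ := 7 / 5) hs hM0 (by norm_num) hQ0 hM hQ ?_ ?_ <;>
        norm_num [hcard]
  · exact sqrt_add_le_of_three_le (by exact_mod_cast hthree) hM0 hQ0
      (sum_abs_le_card_sub hC hv0 hSp hT hvT (Finset.card_pos.1 (by omega)))
      (sum_abs_two_mul_le_card_sub hC hv0 hSp hT hvT hT2)

end SparseToeplitz

section TypeII

variable {n p s S : ℕ} {C : Matrix (Fin p) (Fin p) ℝ} {σ t ρ : ℝ}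

lemma scan_threshold_le_sub_deviation {s M κ : ℝ} (hs : 2 ≤ s) (hM : s * (t + 2 * ρ) ≤ M)
    (ht : 2 * s * ρ ≤ t) (hρ : 0 ≤ ρ) (hκ : κ + (1 + 2 * M) * M / (2 * s * (s + 1)) ≤ s) :
    t ≤ M - 2 * s * κ * ρ - 2 * s * (1 + 2 * M) * ρ ^ 2 := by
  have hM0 : 0 ≤ M := by
    have ht0 : 0 ≤ t := le_trans (by positivity) ht
    exact le_trans (by positivity) hM
  have hsignal : ρ ≤ M / (2 * s * (s + 1)) := by
    rw [le_div_iff₀ (by positivity)]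
    have := mul_le_mul_of_nonneg_left ht (by linarith : 0 ≤ s)
    linarith
  have hfactor : κ + (1 + 2 * M) * ρ ≤ s := by
    rw [mul_div_assoc] at hκ
    exact le_trans (by gcongr) hκ
  have hdeviation : 2 * s * ρ * (κ + (1 + 2 * M) * ρ) ≤ 2 * s * ρ * s :=
    mul_le_mul_of_nonneg_left hfactor (by positivity)
  have hthreshold : (s - 1) * (2 * s * ρ) ≤ (s - 1) * t :=
    mul_le_mul_of_nonneg_left ht (by linarith)
  linarith

lemma exists_toeplitz_of_memF (hC : memF p s S σ 1 C) :
    ∃ (v : ℕ → ℝ) (T : Finset ℕ), C = toeplitz p v ∧ (toeplitz p v).PosDef ∧ v 0 = 1 ∧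
      T ⊆ Finset.Icc 1 S ∧ T.card = s ∧ (∀ j ∈ T, σ ≤ |v j|) ∧
      ∀ j, 1 ≤ j → j < p → j ∉ T → v j = 0 := by
  obtain ⟨hpos, v, hv0, hCv, T, hT, hTs, hσv, hvT⟩ := hC
  obtain rfl : C = toeplitz p v := Matrix.ext hCv
  exact ⟨v, T, rfl, hpos, hv0, hT, hTs, hσv, fun j hj hjp ↦ hvT j hj (Nat.le_sub_one_of_lt hjp)⟩

theorem iidGaussian_scan_accept_le (hn : 0 < n) (hs : 2 ≤ s) (hSp : 2 * S < p) (hρ : 0 ≤ ρ)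
    (ht : 2 * s * ρ ≤ t) (hσ : t + 2 * ρ ≤ σ) (hC : memF p s S σ 1 C) :
    iidGaussian n p C {X | ∀ T : Finset ℕ, T ⊆ Finset.Icc 1 S → T.card = s →
        ∑ j ∈ T, |(lagMatrix p j * (sampleCov X - 1)).trace| < t} ≤
      ENNReal.ofReal (Real.exp (-(n * ((p : ℝ) - S) * ρ ^ 2))) := by
  obtain ⟨v, T, rfl, hpos, hv0, hT, rfl, hσv, hvT⟩ := exists_toeplitz_of_memF hC
  have hM : (T.card : ℝ) * (t + 2 * ρ) ≤ ∑ j ∈ T, |v j| := by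
    rw [← nsmul_eq_mul]
    exact Finset.card_nsmul_le_sum T _ _ fun j hj ↦ hσ.trans (hσv j hj)
  have hsign (x : ℝ) : |(SignType.sign x : ℝ)| ≤ 1 := by
    rcases lt_trichotomy x 0 with h | h | h <;> simp [h]
  have htail := iidGaussian_sum_mul_trace_lagMatrix_le (n := n) (ε := fun j ↦ SignType.sign (v j))
    hn hpos hv0 (by omega) hT (Finset.card_pos.1 (by omega)) (fun j _ ↦ hsign (v j))
    (by positivity) (norm_toeplitz_le_one_add hv0 hvT) hρ
  simp only [sign_mul_self] at htail
  refine (measure_mono fun X hX ↦ ?_).trans htail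
  have hscan : ∑ j ∈ T, (SignType.sign (v j) : ℝ) * (lagMatrix p j * (sampleCov X - 1)).trace ≤
      ∑ j ∈ T, |(lagMatrix p j * (sampleCov X - 1)).trace| :=
    Finset.sum_le_sum fun j _ ↦ (le_abs_self _).trans <| by
      rw [abs_mul]
      exact mul_le_of_le_one_left (abs_nonneg _) (hsign _)
  exact (hscan.trans (hX T hT rfl).le).trans
    (scan_threshold_le_sub_deviation (by exact_mod_cast hs) hM ht hρ
      (sqrt_add_le_card_of_posSemidef_toeplitz hpos.posSemidef hv0 hSp hT hvT hs))

end TypeII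

section Calibration

lemma le_mul_choose {s S : ℕ} (hs : 0 < s) (hsS : s ≤ S) : S ≤ s * S.choose s := by
  obtain ⟨k, rfl⟩ := Nat.exists_eq_add_one.2 hs
  obtain ⟨m, rfl⟩ := Nat.exists_eq_add_one.2 (hs.trans_le hsS)
  rw [mul_comm, ← Nat.add_one_mul_choose_eq]
  exact Nat.le_mul_of_pos_right _ (Nat.choose_pos (Nat.le_of_succ_le_succ hsS))

lemma two_mul_sqrt (x : ℝ) : 2 * √x = √(4 * x) := by
  rw [Real.sqrt_mul zero_le_four, show (4 : ℝ) = 2 ^ 2 by norm_num, Real.sqrt_sq zero_le_two]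

lemma sqrt_two_mul_sqrt_add_le_max {x : ℝ} (hx : 0 ≤ x) :
    √2 * √x + 2 * √x ^ 2 ≤ max √(4 * x) (8 * x) := by
  have hsqrt_two : √2 ≤ 3 / 2 := (Real.sqrt_le_left (by norm_num)).2 (by norm_num)
  have hlinear : √2 * √x ≤ 3 / 4 * √(4 * x) := by
    rw [← two_mul_sqrt]
    linarith [mul_le_mul_of_nonneg_right hsqrt_two (Real.sqrt_nonneg x)]
  rw [Real.sq_sqrt hx]
  linarith [le_max_left √(4 * x) (8 * x), le_max_right √(4 * x) (8 * x)]

lemma mul_two_exp_add_exp_le {x u L : ℝ} (hx : x ≤ Real.exp L) :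
    x * (2 * Real.exp (-(u * L))) + Real.exp (-((u - 1) * L)) ≤
      3 * Real.exp (-(u - 1) * L) := by
  have hunion : x * Real.exp (-(u * L)) ≤ Real.exp (-(u - 1) * L) :=
    calc x * Real.exp (-(u * L)) ≤ Real.exp L * Real.exp (-(u * L)) := by gcongr
      _ = Real.exp (-(u - 1) * L) := by rw [← Real.exp_add]; ring_nf
  rw [← neg_mul (u - 1) L]
  linarith

end Calibration

theorem test_HS_risk_general {p n s S : ℕ} (hn : 0 < n) (hs : 2 ≤ s) (hsS : s ≤ S)
    (hS : (S : ℝ) < (p : ℝ) / 2) (u σ t : ℝ) (hu : 1 ≤ u)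
    (ht : s * max √(4 * u * Real.log (s * S.choose s) / (n * ((p : ℝ) - S)))
      (8 * u * Real.log (s * S.choose s) / (n * ((p : ℝ) - S))) ≤ t)
    (hσ : t + √(4 * (u - 1) * Real.log (s * S.choose s) / (n * ((p : ℝ) - S))) ≤ σ) :
    iidGaussian n p 1 {X | ∃ T : Finset ℕ, T ⊆ Finset.Icc 1 S ∧ T.card = s ∧
        ∑ j ∈ T, |(lagMatrix p j * (sampleCov X - 1)).trace| ≥ t} +
      ⨆ (C : Matrix (Fin p) (Fin p) ℝ) (_ : memF p s S σ 1 C),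
        iidGaussian n p C {X | ∀ T : Finset ℕ, T ⊆ Finset.Icc 1 S → T.card = s →
          ∑ j ∈ T, |(lagMatrix p j * (sampleCov X - 1)).trace| < t} ≤
    ENNReal.ofReal (3 * Real.exp (-(u - 1) * Real.log (s * S.choose s))) := by
  have hSp : 2 * S < p := by exact_mod_cast (by linarith : (2 * S : ℝ) < p)
  have hSC : (S : ℝ) ≤ s * S.choose s := by exact_mod_cast le_mul_choose (by omega) hsS
  have hS2 : (2 : ℝ) ≤ S := by exact_mod_cast hs.trans hsS
  have hL : 0 ≤ Real.log (s * S.choose s) := Real.log_nonneg (by linarith)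
  have hSexp : (S : ℝ) ≤ Real.exp (Real.log (s * S.choose s)) := by
    rwa [Real.exp_log (by linarith)]
  have hN : 0 < (n : ℝ) * ((p : ℝ) - S) := mul_pos (by exact_mod_cast hn) (by linarith)
  set L := Real.log (s * S.choose s)
  set N := (n : ℝ) * ((p : ℝ) - S)
  have : 0 ≤ u - 1 := sub_nonneg.2 hu
  simp only [mul_assoc (4 : ℝ), mul_assoc (8 : ℝ), mul_div_assoc (4 : ℝ), mul_div_assoc (8 : ℝ)]
    at ht hσ
  have hI := iidGaussian_one_scan_reject_le hn (by omega : 0 < s) (by omega : S < p)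
    (Real.sqrt_nonneg (u * L / N)) (le_trans
      (mul_le_mul_of_nonneg_left (sqrt_two_mul_sqrt_add_le_max (by positivity)) (by positivity)) ht)
  have ht' : 2 * s * √((u - 1) * L / N) ≤ t := by
    rw [mul_comm 2 (s : ℝ), mul_assoc, two_mul_sqrt]
    refine le_trans ?_ ht
    gcongr
    refine le_trans ?_ (le_max_left _ _)
    gcongr
    linarith
  have hII (C : Matrix (Fin p) (Fin p) ℝ) (hC : memF p s S σ 1 C) :=
    iidGaussian_scan_accept_le hn hs hSp (Real.sqrt_nonneg _) ht' (by rwa [two_mul_sqrt]) hC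
  refine (add_le_add hI (iSup₂_le hII)).trans ?_
  rw [← ENNReal.ofReal_add (by positivity) (by positivity), Real.sq_sqrt (by positivity),
    Real.sq_sqrt (by positivity), mul_div_cancel₀ _ hN.ne', mul_div_cancel₀ _ hN.ne']
  exact ENNReal.ofReal_le_ofReal (mul_two_exp_add_exp_le hSexp)

/-- Risk bound for the two-sided highly-sparse (scan) test `Δ^{HS}`. -/
theorem test_HS_risk {p n s S : ℕ} (hn : 0 < n) (hs : 2 ≤ s) (hsS : s < S)
    (hS : (S : ℝ) < (p:ℝ)/2) (u σ t : ℝ) (hu : 1 < u)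
    (ht : t = (s : ℝ) * max (Real.sqrt (4 * u * Real.log (s * S.choose s) / (n * ((p:ℝ) - S))))
        (8 * u * Real.log (s * S.choose s) / (n * ((p:ℝ) - S))))
    (hσ : σ ≥ t + max
        (Real.sqrt (4 * (u - 1) * Real.log ((s : ℝ) * (2 * s + 1) * (S.choose s : ℝ)) /
          (n * ((p:ℝ) - S))))
        (8 * (u - 1) * Real.log ((s : ℝ) * (2 * s + 1) * (S.choose s : ℝ)) /
          (n * ((p:ℝ) - S)))) :
    (iidGaussian n p 1) {X | ∃ T : Finset ℕ, T ⊆ Finset.Icc 1 S ∧ T.card = s ∧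
        (∑ j ∈ T, |Matrix.trace (lagMatrix p j * (sampleCov X - 1))|) ≥ t}
    + ⨆ (Cov : Matrix (Fin p) (Fin p) ℝ) (_ : memF p s S σ 1 Cov),
        (iidGaussian n p Cov) {X | ∀ T : Finset ℕ, T ⊆ Finset.Icc 1 S → T.card = s →
          (∑ j ∈ T, |Matrix.trace (lagMatrix p j * (sampleCov X - 1))|) < t}
    ≤ ENNReal.ofReal (4 * Real.exp (-(u - 1) * Real.log (s * S.choose s))) := by
  have hchoose : (1 : ℝ) ≤ S.choose s := by exact_mod_cast Nat.choose_pos hsS.le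
  have : (2 : ℝ) ≤ s := by exact_mod_cast hs
  have hlog : Real.log (s * S.choose s) ≤ Real.log (s * (2 * s + 1) * S.choose s) :=
    Real.log_le_log (by positivity) (by gcongr; nlinarith)
  have hN : 0 ≤ (n : ℝ) * ((p : ℝ) - S) := mul_nonneg n.cast_nonneg (by linarith)
  refine (test_HS_risk_general hn hs hsS.le hS u σ t hu.le ht.ge (le_trans ?_ hσ)).trans ?_
  · have : 0 ≤ 4 * (u - 1) := by linarith
    exact add_le_add_right (le_trans (by gcongr) (le_max_left _ _)) t
  · gcongr
    norm_num
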